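/- arXiv:1306.0107 — 6 statements merged into one kernel-verified Lean document; each statement's English description precedes it below -/
import Mathlib

section
/- Let l and m be trigonometric polynomials (real-valued functions of θ). Assume there exist continuous functions l̃, m̃, w : ℝ → ℝ with w being 2π-periodic (w(θ + 2π) = w(θ) for all θ) such that l(θ) = l̃(w(θ)) and m(θ) = m̃(w(θ)) for all θ ∈ ℝ. Then there exist real polynomials p, q ∈ ℝ[X] and a trigonometric polynomial w₀ such that l(θ) = p(w₀(θ)) and m(θ) = q(w₀(θ)) for all θ ∈ ℝ. -/
/-- A trigonometric polynomial: an element of the ℝ-subalgebra of `ℝ → ℝ`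
generated by `sin` and `cos`. -/
def IsTrigPoly (f : ℝ → ℝ) : Prop :=
  f ∈ Algebra.adjoin ℝ ({Real.sin, Real.cos} : Set (ℝ → ℝ))

section

open Polynomial LaurentPolynomial

/-- Descent of a minimal polynomial: if `z` is a root of a monic polynomial over a subring `B` of an
integrally closed domain and `B` is closed under exact division, then the polynomials over `B`
vanishing at `z` are multiples of a monic one. -/
theorem Subring.exists_monic_dvd_of_eval_eq_zero {R : Type*} [CommRing R] [IsDomain R]
    [IsIntegrallyClosed R] (B : Subring R)
    (hdiv : ∀ b ∈ B, b ≠ 0 → ∀ e, e * b ∈ B → e ∈ B) (z : R)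
    {Q : R[X]} (hQ : Q.Monic) (hQB : ∀ i, Q.coeff i ∈ B) (hQz : Q.eval z = 0) :
    ∃ M : R[X], M.Monic ∧ (∀ i, M.coeff i ∈ B) ∧ M.eval z = 0 ∧
      ∀ G : R[X], (∀ i, G.coeff i ∈ B) → G.eval z = 0 → M ∣ G := by
  let L := FractionRing R
  let ι : R →+* L := algebraMap R L
  have hι : Function.Injective ι := IsFractionRing.injective R L
  let K : Subfield L := Subfield.closure (B.map ι : Set L)
  have hlift : ∀ G : R[X], (∀ i, G.coeff i ∈ B) → ∃ G' : K[X], G'.map K.subtype = G.map ι := by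
    intro G hG
    have : G.map ι ∈ lifts K.subtype := by
      rw [lifts_iff_coeff_lifts]
      intro n
      rw [coeff_map]
      exact ⟨⟨ι (G.coeff n), Subfield.subset_closure ⟨_, hG n, rfl⟩⟩, rfl⟩
    simpa [lifts_iff_set_range] using this
  have hroot : ∀ (G : R[X]) (G' : K[X]), G'.map K.subtype = G.map ι → G.eval z = 0 →
      aeval (ι z) G' = 0 := by
    intro G G' h hG
    have h1 : aeval (ι z) G' = (G'.map K.subtype).eval (ι z) := by
      rw [eval_map, aeval_def]; rfl
    rw [h1, h, eval_map, eval₂_hom, hG, map_zero]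
  obtain ⟨Q', hQ'⟩ := hlift Q hQB
  have hint : IsIntegral K (ι z) := by
    refine ⟨Q', monic_of_injective K.subtype.injective (hQ' ▸ hQ.map ι), ?_⟩
    exact hroot Q Q' hQ' hQz
  have hdvd : ∀ G : R[X], (∀ i, G.coeff i ∈ B) → G.eval z = 0 →
      (minpoly K (ι z)).map K.subtype ∣ G.map ι := by
    intro G hG hGz
    obtain ⟨G', hG'⟩ := hlift G hG
    rw [← hG']
    exact (mapRingHom K.subtype).map_dvd (minpoly.dvd K _ (hroot G G' hG' hGz))
  have hmonic : ((minpoly K (ι z)).map K.subtype).Monic := (minpoly.monic hint).map _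
  obtain ⟨M, hM⟩ := IsIntegrallyClosed.eq_map_mul_C_of_dvd L hQ (hdvd Q hQB hQz)
  rw [hmonic.leadingCoeff, C_1, mul_one] at hM
  have hM1 : M.Monic := monic_of_injective hι (hM ▸ hmonic)
  refine ⟨M, hM1, fun i => ?_, ?_, fun G hG hGz => ?_⟩
  · have h1 : ι (M.coeff i) ∈ K := by
      have : ι (M.coeff i) = ((minpoly K (ι z)).coeff i : L) := by
        rw [← coeff_map, hM, coeff_map]; rfl
      rw [this]
      exact Subtype.property _
    obtain ⟨y, hy, b, hb, hyb⟩ := Subfield.mem_closure_iff.1 h1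
    rw [Subring.closure_eq] at hy hb
    obtain ⟨y, hy, rfl⟩ := hy
    obtain ⟨b, hb, rfl⟩ := hb
    by_cases hb0 : b = 0
    · have : M.coeff i = 0 := hι (by rw [← hyb, hb0, map_zero, div_zero])
      rw [this]
      exact B.zero_mem
    · refine hdiv b hb hb0 _ ?_
      have : M.coeff i * b = y := hι (by
        rw [map_mul, ← hyb]
        exact div_mul_cancel₀ _ (fun h => hb0 (hι (by rw [map_zero]; exact h))))
      rw [this]
      exact hy
  · apply hι
    have := minpoly.aeval K (ι z)
    rw [map_zero, ← this, ← eval₂_hom, ← eval_map]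
    change (M.map (algebraMap R L)).eval _ = _
    rw [hM, eval_map, aeval_def]; rfl
  · rw [← map_dvd_map ι hι hM1]
    have := hdvd G hG hGz
    rwa [← hM] at this

instance LaurentPolynomial.instIsIntegrallyClosed (k : Type*) [Field k] :
    IsIntegrallyClosed k[T;T⁻¹] :=
  isIntegrallyClosed_of_isLocalization (R := k[X]) _ (Submonoid.powers X)
    (powers_le_nonZeroDivisors_of_noZeroDivisors X_ne_zero)

namespace LaurentPolynomial

variable {k : Type*} [Field k]

lemma exists_isGreatest_support {h : k[T;T⁻¹]} (hh : h ≠ 0) :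
    ∃ t, h.coeff t ≠ 0 ∧ ∀ i, h.coeff i ≠ 0 → i ≤ t := by
  have hs : h.coeff.support.Nonempty := by
    by_contra hc
    exact hh (by ext i; by_contra hi; exact hc ⟨i, Finsupp.mem_support_iff.2 hi⟩)
  exact ⟨_, Finsupp.mem_support_iff.1 (Finset.max'_mem _ hs),
    fun i hi => Finset.le_max' _ _ (Finsupp.mem_support_iff.2 hi)⟩

lemma exists_isLeast_support {h : k[T;T⁻¹]} (hh : h ≠ 0) :
    ∃ t, h.coeff t ≠ 0 ∧ ∀ i, h.coeff i ≠ 0 → t ≤ i := by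
  have hs : h.coeff.support.Nonempty := by
    by_contra hc
    exact hh (by ext i; by_contra hi; exact hc ⟨i, Finsupp.mem_support_iff.2 hi⟩)
  exact ⟨_, Finsupp.mem_support_iff.1 (Finset.min'_mem _ hs),
    fun i hi => Finset.min'_le _ _ (Finsupp.mem_support_iff.2 hi)⟩

lemma coeff_mul_ne_zero_of_isGreatest {g h : k[T;T⁻¹]} {s t : ℤ}
    (hgs : g.coeff s ≠ 0) (hg : ∀ i, g.coeff i ≠ 0 → i ≤ s)
    (hht : h.coeff t ≠ 0) (hh : ∀ i, h.coeff i ≠ 0 → i ≤ t) : (g * h).coeff (s + t) ≠ 0 := by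
  rw [AddMonoidAlgebra.coeff_mul_add_of_uniqueAdd]
  · exact mul_ne_zero hgs hht
  · intro a b ha hb hab
    have := hg a (Finsupp.mem_support_iff.1 ha)
    have := hh b (Finsupp.mem_support_iff.1 hb)
    omega

lemma coeff_mul_ne_zero_of_isLeast {g h : k[T;T⁻¹]} {s t : ℤ}
    (hgs : g.coeff s ≠ 0) (hg : ∀ i, g.coeff i ≠ 0 → s ≤ i)
    (hht : h.coeff t ≠ 0) (hh : ∀ i, h.coeff i ≠ 0 → t ≤ i) : (g * h).coeff (s + t) ≠ 0 := by
  rw [AddMonoidAlgebra.coeff_mul_add_of_uniqueAdd]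
  · exact mul_ne_zero hgs hht
  · intro a b ha hb hab
    have := hg a (Finsupp.mem_support_iff.1 ha)
    have := hh b (Finsupp.mem_support_iff.1 hb)
    omega

lemma eq_C_mul_T_of_support {h : k[T;T⁻¹]} {t : ℤ} (hh : ∀ i, h.coeff i ≠ 0 → i = t) :
    h = C (h.coeff t) * T t := by
  ext i
  rw [← single_eq_C_mul_T, AddMonoidAlgebra.coeff_single, Finsupp.single_apply]
  split_ifs with hi
  · rw [hi]
  · by_contra hc
    exact hi (hh i hc).symm

lemma coeff_mul_T (h : k[T;T⁻¹]) (n i : ℤ) : (h * T n).coeff i = h.coeff (i - n) := by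
  induction h using LaurentPolynomial.induction_on' with
  | add p q hp hq => simp [add_mul, hp, hq]
  | C_mul_T m a =>
    rw [mul_assoc, ← T_add, ← smul_eq_C_mul, ← smul_eq_C_mul]
    simp [eq_sub_iff_add_eq]

lemma coeff_toLaurent_natCast (p : k[X]) (i : ℕ) : (toLaurent p).coeff i = p.coeff i := by
  induction p using Polynomial.induction_on' with
  | add p q hp hq => rw [map_add, AddMonoidAlgebra.coeff_add, Finsupp.add_apply, hp, hq, coeff_add]
  | monomial n a =>
    rw [← C_mul_X_pow_eq_monomial, toLaurent_C_mul_X_pow, ← smul_eq_C_mul]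
    simp [coeff_X_pow, eq_comm]

lemma exists_toLaurent_eq {h : k[T;T⁻¹]} (hh : ∀ i, h.coeff i ≠ 0 → 0 ≤ i) :
    ∃ p : k[X], toLaurent p = h := by
  obtain ⟨n, p, hp⟩ := exists_T_pow h
  have hdvd : X ^ n ∣ p := by
    rw [X_pow_dvd_iff]
    intro d hd
    rw [← coeff_toLaurent_natCast, hp, coeff_mul_T]
    by_contra hc
    have := hh _ hc
    omega
  obtain ⟨q, rfl⟩ := hdvd
  refine ⟨q, (isUnit_T (R := k) n).mul_right_cancel ?_⟩
  rw [← hp, map_mul, toLaurent_X_pow, mul_comm]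

/-- The evaluation of a Laurent polynomial at a unit. -/
noncomputable def eval (u : kˣ) : k[T;T⁻¹] →+* k := eval₂ (RingHom.id k) u

@[simp] lemma eval_C (u : kˣ) (a : k) : eval u (C a) = a := eval₂_C ..
@[simp] lemma eval_T (u : kˣ) (n : ℤ) : eval u (T n) = ((u ^ n : kˣ) : k) := eval₂_T ..
@[simp] lemma eval_toLaurent (u : kˣ) (p : k[X]) : eval u (toLaurent p) = p.eval (u : k) :=
  eval₂_toLaurent ..

lemma eval_aeval (u : kˣ) (h : k[T;T⁻¹]) (P : k[X]) :
    eval u (aeval h P) = P.eval (eval u h) := by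
  have : (eval u).comp (algebraMap k k[T;T⁻¹]) = RingHom.id k :=
    RingHom.ext fun a => by rw [RingHom.comp_apply, ← C_eq_algebraMap, eval_C]; rfl
  rw [aeval_def, hom_eval₂, this, eval₂_id]

lemma finite_setOf_eval_eq_zero {h : k[T;T⁻¹]} (hh : h ≠ 0) : {u : kˣ | eval u h = 0}.Finite := by
  obtain ⟨n, p, hp⟩ := exists_T_pow h
  have hp0 : p ≠ 0 := by
    rintro rfl
    rw [map_zero] at hp
    exact mul_ne_zero hh (isUnit_T _).ne_zero hp.symm
  refine Set.Finite.of_finite_image (f := ((↑) : kˣ → k)) ?_ Units.val_injective.injOn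
  refine (p.rootSet_finite k).subset ?_
  rintro _ ⟨u, hu, rfl⟩
  rw [mem_rootSet]
  refine ⟨hp0, ?_⟩
  have := congrArg (eval u) hp
  have hu0 : eval u h = 0 := hu
  rwa [map_mul, eval_toLaurent, hu0, zero_mul, ← coe_aeval_eq_eval] at this

lemma eval_map_C_T_one (p : k[X]) : (p.map C).eval (T 1 : k[T;T⁻¹]) = toLaurent p := by
  induction p using Polynomial.induction_on' with
  | add p q hp hq => simp [hp, hq]
  | monomial n a => simp [← C_mul_X_pow_eq_monomial]

/-- Taking `T ^ j`-coefficients commutes with evaluating the polynomial variable at a constant. -/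
lemma exists_eval_eq_coeff_eval (M : k[T;T⁻¹][X]) (j : ℤ) :
    ∃ m : k[X], (∀ i, m.coeff i = (M.coeff i).coeff j) ∧
      ∀ y, m.eval y = (M.eval (C y)).coeff j := by
  induction M using Polynomial.induction_on' with
  | add p q hp hq =>
    obtain ⟨a, ha, ha'⟩ := hp
    obtain ⟨b, hb, hb'⟩ := hq
    exact ⟨a + b, by simp [ha, hb], by simp [ha', hb']⟩
  | monomial n h =>
    refine ⟨monomial n (h.coeff j), fun i => ?_, fun y => ?_⟩
    · simp only [coeff_monomial]
      split_ifs <;> simp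
    · rw [eval_monomial, eval_monomial, ← map_pow, mul_comm h, ← smul_eq_C_mul]
      simp [mul_comm]

/-- The conjugate Laurent polynomial, `∑ aᵢ Tⁱ ↦ ∑ conj aᵢ T⁻ⁱ`: it takes conjugate values on the
unit circle. -/
noncomputable def conjInvert : ℂ[T;T⁻¹] →+* ℂ[T;T⁻¹] :=
  (invert (R := ℂ) : ℂ[T;T⁻¹] →+* ℂ[T;T⁻¹]).comp
    (AddMonoidAlgebra.mapRingHom ℤ (starRingEnd ℂ))

@[simp] lemma coeff_conjInvert (h : ℂ[T;T⁻¹]) (i : ℤ) :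
    (conjInvert h).coeff i = starRingEnd ℂ (h.coeff (-i)) := by
  simp [conjInvert]

@[simp] lemma conjInvert_C (a : ℂ) : conjInvert (C a) = C (starRingEnd ℂ a) := by
  ext i
  by_cases hi : i = 0 <;> simp [hi]

@[simp] lemma conjInvert_T (n : ℤ) : conjInvert (T n) = T (-n) := by
  ext i
  simp [apply_ite, neg_eq_iff_eq_neg]

@[simp] lemma conjInvert_conjInvert (h : ℂ[T;T⁻¹]) : conjInvert (conjInvert h) = h := by
  ext i
  simp

variable (B : Subalgebra ℂ ℂ[T;T⁻¹])

lemma eq_C_of_mem_of_support (hT : ∀ n : ℤ, T n ∈ B → n = 0) {h : ℂ[T;T⁻¹]} (hB : h ∈ B) {t : ℤ}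
    (hh : ∀ i, h.coeff i ≠ 0 → i = t) : ∃ a, h = C a := by
  have h1 := eq_C_mul_T_of_support hh
  by_cases h0 : h.coeff t = 0
  · exact ⟨0, by rw [h1, h0]; simp⟩
  · have : T t ∈ B := by
      have : (T t : ℂ[T;T⁻¹]) = (h.coeff t)⁻¹ • h := by
        have h2 : C (h.coeff t)⁻¹ * C (h.coeff t) = (1 : ℂ[T;T⁻¹]) := by
          rw [← map_mul, inv_mul_cancel₀ h0, map_one]
        rw [smul_eq_C_mul]
        linear_combination (-T t) * h2 - C (h.coeff t)⁻¹ * h1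
      rw [this]
      exact B.smul_mem hB _
    obtain rfl := hT t this
    exact ⟨h.coeff 0, by rw [T_zero, mul_one] at h1; exact h1⟩

lemma C_mem (a : ℂ) : C a ∈ B := by
  rw [C_eq_algebraMap]
  exact B.algebraMap_mem a

/-- The relation satisfied by `T` over a subalgebra containing `h`. -/
lemma exists_relation (h : ℂ[T;T⁻¹]) (hB : h ∈ B) (n : ℕ) (p : ℂ[X])
    (hp : toLaurent p = h * T n) :
    (∀ i, (p.map C - Polynomial.C h * X ^ n).coeff i ∈ B) ∧
    (p.map C - Polynomial.C h * X ^ n).eval (T 1) = 0 ∧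
    ∀ y : ℂˣ, (p.map C - Polynomial.C h * X ^ n).eval (C (y : ℂ)) =
      C ((y : ℂ) ^ n) * (C (eval y h) - h) := by
  refine ⟨fun i => ?_, ?_, fun y => ?_⟩
  · rw [coeff_sub, coeff_map, coeff_C_mul, coeff_X_pow]
    refine B.sub_mem (C_mem B _) (B.mul_mem hB ?_)
    split_ifs
    exacts [B.one_mem, B.zero_mem]
  · rw [eval_sub, eval_map_C_T_one, hp]
    simp
  · have h1 := congrArg (eval y) hp
    rw [eval_toLaurent, map_mul, eval_T] at h1
    rw [eval_sub, eval_map, eval₂_hom, h1]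
    simp
    ring

/-- A subalgebra closed under exact division and containing no nontrivial power of `T` has a
nonconstant element `φ` such that every element is a constant modulo `φ`. -/
theorem exists_mem_forall_exists_eq (hdiv : ∀ b ∈ B, b ≠ 0 → ∀ e, e * b ∈ B → e ∈ B)
    (hT : ∀ n : ℤ, T n ∈ B → n = 0)
    {f : ℂ[T;T⁻¹]} (hfB : f ∈ B) (hf : conjInvert f = f) (hfC : ∀ a, f ≠ C a) :
    ∃ φ ∈ B, (∀ a, φ ≠ C a) ∧ φ.coeff 0 ≠ 0 ∧
      ∀ h ∈ B, ∃ h' ∈ B, ∃ a, h = C a + φ * h' := by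
  -- `f = a T⁻ⁿ + ⋯ + conj a Tⁿ` with `n` positive and `a ≠ 0`
  obtain ⟨t, ht, htmin⟩ := exists_isLeast_support (h := f) (by rintro rfl; exact hfC 0 (by simp))
  have hsymm : ∀ i, f.coeff i ≠ 0 → f.coeff (-i) ≠ 0 := by
    intro i hi h0
    rw [← hf, coeff_conjInvert, h0, map_zero] at hi
    exact hi rfl
  have ht0 : t < 0 := by
    by_contra hc
    refine hfC (f.coeff 0) ?_
    have := eq_C_mul_T_of_support (h := f) (t := 0) (fun i hi => by
      have h1 := htmin i hi
      have h2 := htmin (-i) (hsymm i hi)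
      omega)
    rwa [T_zero, mul_one] at this
  obtain ⟨n, rfl⟩ : ∃ n : ℕ, t = -n := ⟨(-t).toNat, by omega⟩
  obtain ⟨p, hp⟩ : ∃ p : ℂ[X], toLaurent p = f * T n := by
    refine exists_toLaurent_eq fun i hi => ?_
    rw [coeff_mul_T] at hi
    have := htmin _ hi
    omega
  have hpc : ∀ i : ℕ, p.coeff i = f.coeff (i - n) := fun i => by
    rw [← coeff_toLaurent_natCast, hp, coeff_mul_T]
  have hp0 : p.coeff 0 ≠ 0 := by rw [hpc]; simpa using ht
  have hpn : n < p.natDegree := by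
    have : p.coeff (n + n) ≠ 0 := by
      rw [hpc]
      simpa using hsymm _ ht
    have := le_natDegree_of_ne_zero this
    omega
  obtain ⟨hG1, hG2, -⟩ := exists_relation B f hfB n p hp
  set G : ℂ[T;T⁻¹][X] := p.map C - Polynomial.C f * X ^ n with hG
  have hlead : G.coeff p.natDegree = C p.leadingCoeff := by
    rw [hG, coeff_sub, coeff_map, coeff_C_mul, coeff_X_pow, if_neg hpn.ne']
    simp
  have hdeg : G.natDegree ≤ p.natDegree :=
    (natDegree_sub_le _ _).trans
      (max_le natDegree_map_le ((natDegree_C_mul_X_pow_le _ _).trans hpn.le))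
  have hlc : p.leadingCoeff ≠ 0 := by
    rw [leadingCoeff_ne_zero]
    rintro rfl
    simp at hp0
  have hcc : C (p.leadingCoeff⁻¹) * C p.leadingCoeff = (1 : ℂ[T;T⁻¹]) := by
    rw [← map_mul, inv_mul_cancel₀ hlc, map_one]
  set Q : ℂ[T;T⁻¹][X] := Polynomial.C (C p.leadingCoeff⁻¹) * G with hQ
  have hQm : Q.Monic := by
    refine monic_of_natDegree_le_of_coeff_eq_one p.natDegree ?_ ?_
    · exact (natDegree_C_mul_le _ _).trans hdeg
    · rw [hQ, coeff_C_mul, hlead, hcc]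
  have hQB : ∀ i, Q.coeff i ∈ B := fun i => by
    rw [hQ, coeff_C_mul]
    exact B.mul_mem (C_mem B _) (hG1 i)
  have hQz : Q.eval (T 1) = 0 := by rw [hQ, eval_mul, hG2, mul_zero]
  obtain ⟨M, hM1, hMB, hMz, hMdvd⟩ := B.toSubring.exists_monic_dvd_of_eval_eq_zero hdiv (T 1)
    hQm hQB hQz
  -- the constant coefficient of `M` is a nonzero constant
  obtain ⟨c, hc⟩ : ∃ c, M.coeff 0 = C c := by
    obtain ⟨N, hN⟩ := hMdvd G hG1 hG2
    have hprod : M.coeff 0 * N.coeff 0 = C (p.coeff 0) := by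
      rw [← mul_coeff_zero, ← hN, hG, coeff_sub, coeff_map, coeff_C_mul, coeff_X_pow, if_neg]
      · simp
      · omega
    have hne : M.coeff 0 * N.coeff 0 ≠ 0 := by
      rw [hprod]
      intro h0
      have := congrArg (fun g => g.coeff 0) h0
      simp at this
      exact hp0 this
    have hzero : ∀ i, (M.coeff 0 * N.coeff 0).coeff i ≠ 0 → i = 0 := by
      intro i hi
      rw [hprod, C_apply] at hi
      by_contra hc
      simp [hc] at hi
    obtain ⟨s, hs, hsmax⟩ := exists_isGreatest_support (left_ne_zero_of_mul hne)
    obtain ⟨s', hs', hsmin⟩ := exists_isLeast_support (left_ne_zero_of_mul hne)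
    obtain ⟨r, hr, hrmax⟩ := exists_isGreatest_support (right_ne_zero_of_mul hne)
    obtain ⟨r', hr', hrmin⟩ := exists_isLeast_support (right_ne_zero_of_mul hne)
    have h1 := hzero _ (coeff_mul_ne_zero_of_isGreatest hs hsmax hr hrmax)
    have h2 := hzero _ (coeff_mul_ne_zero_of_isLeast hs' hsmin hr' hrmin)
    have h3 := hsmax _ hs'
    have h4 := hrmax _ hr'
    refine eq_C_of_mem_of_support B hT (hMB 0) (t := s) fun i hi => ?_
    have := hsmax i hi
    have := hsmin i hi
    omega
  have hc0 : c ≠ 0 := by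
    rintro rfl
    obtain ⟨N, hN⟩ := hMdvd G hG1 hG2
    have : G.coeff 0 = 0 := by rw [hN, mul_coeff_zero, hc]; simp
    rw [hG, coeff_sub, coeff_map, coeff_C_mul, coeff_X_pow, if_neg (by omega)] at this
    have := congrArg (fun g => g.coeff 0) this
    simp at this
    exact hp0 this
  -- some coefficient of `M` is not constant, as `T` is transcendental
  obtain ⟨j, hj, i, hij⟩ : ∃ j : ℤ, j ≠ 0 ∧ ∃ i, (M.coeff i).coeff j ≠ 0 := by
    by_contra! hcon
    obtain ⟨m, hm, -⟩ := exists_eval_eq_coeff_eval M 0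
    have hmM : m.map C = M := by
      ext i j
      rw [coeff_map, C_apply, hm]
      split_ifs with hj
      · rw [hj]
      · exact (hcon j hj i).symm
    rw [← hmM, eval_map_C_T_one, toLaurent_eq_zero] at hMz
    rw [hMz, Polynomial.map_zero] at hmM
    exact hM1.ne_zero hmM.symm
  obtain ⟨m₀, hm₀, hm₀e⟩ := exists_eval_eq_coeff_eval M 0
  obtain ⟨m₁, hm₁, hm₁e⟩ := exists_eval_eq_coeff_eval M j
  obtain ⟨y, hy⟩ : ∃ y, (X * m₀ * m₁).eval y ≠ 0 := by
    by_contra! hcon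
    have h0 : X * m₀ * m₁ = 0 := Polynomial.funext fun y => by rw [hcon, eval_zero]
    rcases mul_eq_zero.1 h0 with h0 | h0
    · rcases mul_eq_zero.1 h0 with h0 | h0
      · exact X_ne_zero h0
      · have := hm₀ 0
        rw [h0, hc] at this
        simp at this
        exact hc0 this.symm
    · have := hm₁ i
      rw [h0] at this
      exact hij (by simpa using this.symm)
  simp only [eval_mul, eval_X, mul_ne_zero_iff, hm₀e, hm₁e] at hy
  obtain ⟨⟨hy0, hφ0⟩, hφj⟩ := hy
  refine ⟨M.eval (C y), ?_, ?_, hφ0, ?_⟩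
  · rw [eval_eq_sum]
    exact B.sum_mem fun i _ => B.mul_mem (hMB i) (B.pow_mem (C_mem B y) i)
  · intro a ha
    rw [ha, C_apply, if_neg hj] at hφj
    exact hφj rfl
  · intro h hh
    obtain ⟨n, p, hp⟩ := exists_T_pow h
    obtain ⟨h1, h2, h3⟩ := exists_relation B h hh n p hp
    obtain ⟨N, hN⟩ := hMdvd _ h1 h2
    have h4 := h3 (Units.mk0 y hy0)
    rw [hN, eval_mul, Units.val_mk0] at h4
    set a := eval (Units.mk0 y hy0) h
    have h5 : h = C a + M.eval (C y) * (-C ((y ^ n)⁻¹) * N.eval (C y)) := by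
      have h6 : C ((y ^ n)⁻¹) * C (y ^ n) = (1 : ℂ[T;T⁻¹]) := by
        rw [← map_mul, inv_mul_cancel₀ (pow_ne_zero _ hy0), map_one]
      linear_combination C ((y ^ n)⁻¹) * h4 + (C a - h) * h6
    refine ⟨_, ?_, a, h5⟩
    refine hdiv (M.eval (C y)) ?_ ?_ _ ?_
    · rw [eval_eq_sum]
      exact B.sum_mem fun i _ => B.mul_mem (hMB i) (B.pow_mem (C_mem B y) i)
    · intro h0
      rw [h0] at hφ0
      exact hφ0 rfl
    · rw [mul_comm]
      have : M.eval (C y) * (-C ((y ^ n)⁻¹) * N.eval (C y)) = h - C a := by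
        rw [eq_sub_iff_add_eq, add_comm]; exact h5.symm
      rw [this]
      exact B.sub_mem hh (C_mem B a)

/-- A subalgebra of Laurent polynomials stable under conjugation and under exact division, and not
containing any nontrivial power of `T`, is generated by one self-conjugate element. -/
theorem exists_generator (hdiv : ∀ b ∈ B, b ≠ 0 → ∀ e, e * b ∈ B → e ∈ B)
    (hT : ∀ n : ℤ, T n ∈ B → n = 0) (hconj : ∀ h ∈ B, conjInvert h ∈ B)
    {f : ℂ[T;T⁻¹]} (hfB : f ∈ B) (hf : conjInvert f = f) (hfC : ∀ a, f ≠ C a) :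
    ∃ ψ, conjInvert ψ = ψ ∧ ∀ h ∈ B, ∃ P : ℂ[X], h = aeval ψ P := by
  obtain ⟨φ, hφB, hφC, hφ0, hφ⟩ := exists_mem_forall_exists_eq B hdiv hT hfB hf hfC
  have hφne : φ ≠ 0 := by rintro rfl; exact hφ0 rfl
  obtain ⟨t, ht, htmax⟩ := exists_isGreatest_support hφne
  obtain ⟨s, hs, hsmin⟩ := exists_isLeast_support hφne
  have ht0 := htmax 0 hφ0
  have hs0 := hsmin 0 hφ0
  -- the conjugate of `φ` is an affine function of `φ`
  obtain ⟨α, a, hα0, hα⟩ : ∃ α a, α ≠ 0 ∧ conjInvert φ = C a + φ * C α := by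
    obtain ⟨g, hgB, a, hg⟩ := hφ _ (hconj φ hφB)
    have hg0 : g ≠ 0 := by
      rintro rfl
      refine hφC (starRingEnd ℂ a) ?_
      rw [← conjInvert_conjInvert φ, hg, mul_zero, add_zero, conjInvert_C]
    have hsupp : ∀ i, (φ * g).coeff i ≠ 0 → -t ≤ i ∧ i ≤ -s := by
      intro i hi
      by_cases hi0 : i = 0
      · omega
      · have h1 : (φ * g).coeff i = starRingEnd ℂ (φ.coeff (-i)) := by
          rw [← coeff_conjInvert, hg]
          simp [hi0]
        rw [h1, _root_.map_ne_zero] at hi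
        have := htmax _ hi
        have := hsmin _ hi
        omega
    obtain ⟨r, hr, hrmax⟩ := exists_isGreatest_support hg0
    obtain ⟨q, hq, hqmin⟩ := exists_isLeast_support hg0
    have h1 := hsupp _ (coeff_mul_ne_zero_of_isGreatest ht htmax hr hrmax)
    have h2 := hsupp _ (coeff_mul_ne_zero_of_isLeast hs hsmin hq hqmin)
    obtain ⟨α, rfl⟩ := eq_C_of_mem_of_support B hT hgB (t := r) fun i hi => by
      have := hrmax i hi
      have := hqmin i hi
      omega
    exact ⟨α, a, by rintro rfl; simp at hg0, hg⟩
  obtain ⟨i, hi, hφi⟩ : ∃ i, i ≠ 0 ∧ φ.coeff i ≠ 0 := by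
    by_contra! hcon
    refine hφC (φ.coeff 0) ?_
    have := eq_C_mul_T_of_support (h := φ) (t := 0) fun i hi => by
      by_contra hc
      exact hi (hcon i hc)
    rwa [T_zero, mul_one] at this
  have hφi' : φ.coeff (-i) ≠ 0 := by
    intro h0
    have h1 := congrArg (fun g => g.coeff i) hα
    rw [mul_comm, ← smul_eq_C_mul] at h1
    simp [h0, hi, hα0, hφi] at h1
  have hst : s < 0 ∧ 0 < t := by
    have := htmax _ hφi
    have := htmax _ hφi'
    have := hsmin _ hφi
    have := hsmin _ hφi'
    omega
  have hgen : ∀ (N : ℕ), ∀ h ∈ B, (∀ i, h.coeff i ≠ 0 → -N ≤ i ∧ i ≤ N) →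
      ∃ P : ℂ[X], h = aeval φ P := by
    intro N
    induction N with
    | zero =>
      intro h hB hh
      refine ⟨Polynomial.C (h.coeff 0), ?_⟩
      have := eq_C_mul_T_of_support (h := h) (t := 0) fun i hi => by
        have := hh i hi
        omega
      rw [T_zero, mul_one] at this
      rw [aeval_C, ← C_eq_algebraMap]
      exact this
    | succ N ih =>
      intro h hB hh
      obtain ⟨g, hgB, a, hg⟩ := hφ h hB
      have hsupp : ∀ i, (φ * g).coeff i ≠ 0 → -(N + 1) ≤ i ∧ i ≤ N + 1 := by
        intro i hi
        by_cases hi0 : i = 0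
        · omega
        · have h1 : (φ * g).coeff i = h.coeff i := by
            rw [hg]
            simp [hi0]
          rw [h1] at hi
          have := hh i hi
          omega
      obtain ⟨P, hP⟩ : ∃ P : ℂ[X], g = aeval φ P := by
        by_cases hg0 : g = 0
        · exact ⟨0, by simp [hg0]⟩
        refine ih g hgB fun i hi => ?_
        obtain ⟨r, hr, hrmax⟩ := exists_isGreatest_support hg0
        obtain ⟨q, hq, hqmin⟩ := exists_isLeast_support hg0
        have h1 := hsupp _ (coeff_mul_ne_zero_of_isGreatest ht htmax hr hrmax)
        have h2 := hsupp _ (coeff_mul_ne_zero_of_isLeast hs hsmin hq hqmin)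
        have := hrmax i hi
        have := hqmin i hi
        omega
      exact ⟨Polynomial.C a + X * P, by
        rw [hg, hP, map_add, aeval_C, map_mul, aeval_X, ← C_eq_algebraMap]⟩
  obtain ⟨ψ, β, γ, hβ, hψ, hψφ⟩ : ∃ ψ β γ, β ≠ 0 ∧ conjInvert ψ = ψ ∧ ψ = C β * φ + C γ := by
    by_cases hα1 : 1 + α = 0
    · refine ⟨C Complex.I * (φ - conjInvert φ), 2 * Complex.I, -Complex.I * a, by simp, ?_, ?_⟩
      · simp only [map_mul, map_sub, conjInvert_conjInvert, conjInvert_C, Complex.conj_I, map_neg]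
        ring
      · rw [hα, show α = -1 by linear_combination hα1]
        simp only [map_mul, map_neg, map_one, map_ofNat]
        ring
    · refine ⟨φ + conjInvert φ, 1 + α, a, hα1, ?_, ?_⟩
      · rw [map_add, conjInvert_conjInvert, add_comm]
      · rw [hα, map_add, map_one]
        ring
  refine ⟨ψ, hψ, fun h hB => ?_⟩
  obtain ⟨N, hN⟩ : ∃ N : ℕ, ∀ i, h.coeff i ≠ 0 → -N ≤ i ∧ i ≤ N := by
    by_cases h0 : h = 0
    · exact ⟨0, fun i hi => absurd (by rw [h0]; rfl) hi⟩
    obtain ⟨r, -, hrmax⟩ := exists_isGreatest_support h0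
    obtain ⟨q, -, hqmin⟩ := exists_isLeast_support h0
    refine ⟨r.natAbs + q.natAbs, fun i hi => ?_⟩
    have := hrmax i hi
    have := hqmin i hi
    omega
  obtain ⟨P, rfl⟩ := hgen N h hB hN
  refine ⟨P.comp (Polynomial.C β⁻¹ * (X - Polynomial.C γ)), ?_⟩
  rw [aeval_comp]
  congr 2
  have h2 : C β⁻¹ * C β = (1 : ℂ[T;T⁻¹]) := by rw [← map_mul, inv_mul_cancel₀ hβ, map_one]
  simp only [map_mul, map_sub, aeval_C, aeval_X, ← C_eq_algebraMap, hψφ]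
  linear_combination (-φ) * h2

end LaurentPolynomial

/-- The point `exp (iθ)` as a unit of `ℂ`. -/
noncomputable def circleUnit (θ : ℝ) : ℂˣ := Circle.toUnits (Circle.exp θ)

lemma coe_circleUnit (θ : ℝ) : (circleUnit θ : ℂ) = Complex.exp (θ * Complex.I) := by
  simp [circleUnit]

lemma coe_circleUnit_inv (θ : ℝ) : ((circleUnit θ)⁻¹ : ℂˣ) = Complex.exp (-(θ * Complex.I)) := by
  rw [Units.val_inv_eq_inv_val, coe_circleUnit, Complex.exp_neg]

lemma conj_circleUnit (θ : ℝ) :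
    starRingEnd ℂ (circleUnit θ : ℂ) = ((circleUnit θ)⁻¹ : ℂˣ) := by
  rw [coe_circleUnit, coe_circleUnit_inv, ← Complex.exp_conj]
  simp

lemma eval_circleUnit_conjInvert (θ : ℝ) (h : ℂ[T;T⁻¹]) :
    LaurentPolynomial.eval (circleUnit θ) (conjInvert h) =
      starRingEnd ℂ (LaurentPolynomial.eval (circleUnit θ) h) := by
  induction h using LaurentPolynomial.induction_on' with
  | add p q hp hq => simp [hp, hq]
  | C_mul_T n a =>
    simp only [map_mul, conjInvert_C, conjInvert_T, LaurentPolynomial.eval_C, eval_T, Units.val_zpow_eq_zpow_val,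
      map_zpow₀, conj_circleUnit, Units.val_inv_eq_inv_val, inv_zpow', zpow_neg]

lemma IsTrigPoly.exists_laurentPolynomial {f : ℝ → ℝ} (hf : IsTrigPoly f) :
    ∃ F : ℂ[T;T⁻¹], conjInvert F = F ∧
      ∀ θ, LaurentPolynomial.eval (circleUnit θ) F = f θ := by
  induction hf using Algebra.adjoin_induction with
  | mem f hf =>
    rcases hf with rfl | rfl
    · refine ⟨LaurentPolynomial.C (-Complex.I / 2) * (T 1 - T (-1)), ?_, fun θ => ?_⟩
      · simp only [map_mul, map_sub, conjInvert_C, conjInvert_T, neg_neg, map_div₀, map_neg,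
          Complex.conj_I, map_ofNat, neg_div]
        ring
      · simp only [map_mul, map_sub, LaurentPolynomial.eval_C, eval_T, zpow_one, zpow_neg_one, coe_circleUnit,
          coe_circleUnit_inv, Complex.ofReal_sin, Complex.sin, neg_mul]
        ring
    · refine ⟨LaurentPolynomial.C (1 / 2) * (T 1 + T (-1)), ?_, fun θ => ?_⟩
      · simp only [map_mul, map_add, conjInvert_C, conjInvert_T, neg_neg, map_div₀, map_one,
          map_ofNat]
        ring
      · simp only [map_mul, map_add, LaurentPolynomial.eval_C, eval_T, zpow_one, zpow_neg_one, coe_circleUnit,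
          coe_circleUnit_inv, Complex.ofReal_cos, Complex.cos, neg_mul]
        ring
  | algebraMap r => exact ⟨LaurentPolynomial.C (r : ℂ), by simp, fun θ => by simp⟩
  | add f g _ _ hf hg =>
    obtain ⟨F, hF, hF'⟩ := hf
    obtain ⟨G, hG, hG'⟩ := hg
    exact ⟨F + G, by simp [hF, hG], fun θ => by simp [hF', hG']⟩
  | mul f g _ _ hf hg =>
    obtain ⟨F, hF, hF'⟩ := hf
    obtain ⟨G, hG, hG'⟩ := hg
    exact ⟨F * G, by simp [hF, hG], fun θ => by simp [hF', hG']⟩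

lemma isTrigPoly_re_im_eval (h : ℂ[T;T⁻¹]) :
    IsTrigPoly (fun θ => (LaurentPolynomial.eval (circleUnit θ) h).re) ∧
      IsTrigPoly (fun θ => (LaurentPolynomial.eval (circleUnit θ) h).im) := by
  have hsin : IsTrigPoly Real.sin := Algebra.subset_adjoin (by simp)
  have hcos : IsTrigPoly Real.cos := Algebra.subset_adjoin (by simp)
  have hmul : ∀ g h : ℂ[T;T⁻¹],
      IsTrigPoly (fun θ => (LaurentPolynomial.eval (circleUnit θ) g).re) ∧
      IsTrigPoly (fun θ => (LaurentPolynomial.eval (circleUnit θ) g).im) →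
      IsTrigPoly (fun θ => (LaurentPolynomial.eval (circleUnit θ) h).re) ∧
      IsTrigPoly (fun θ => (LaurentPolynomial.eval (circleUnit θ) h).im) →
      IsTrigPoly (fun θ => (LaurentPolynomial.eval (circleUnit θ) (g * h)).re) ∧
      IsTrigPoly (fun θ => (LaurentPolynomial.eval (circleUnit θ) (g * h)).im) := by
    rintro g h ⟨hg, hg'⟩ ⟨hh, hh'⟩
    simp only [map_mul, Complex.mul_re, Complex.mul_im]
    exact ⟨Subalgebra.sub_mem _ (Subalgebra.mul_mem _ hg hh) (Subalgebra.mul_mem _ hg' hh'),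
      Subalgebra.add_mem _ (Subalgebra.mul_mem _ hg hh') (Subalgebra.mul_mem _ hg' hh)⟩
  induction h using LaurentPolynomial.induction_on with
  | h_C a =>
    simp only [LaurentPolynomial.eval_C]
    exact ⟨Subalgebra.algebraMap_mem _ a.re, Subalgebra.algebraMap_mem _ a.im⟩
  | h_add hp hq =>
    simp only [map_add, Complex.add_re, Complex.add_im]
    exact ⟨Subalgebra.add_mem _ hp.1 hq.1, Subalgebra.add_mem _ hp.2 hq.2⟩
  | h_C_mul_T n a h =>
    rw [T_add, ← mul_assoc]
    refine hmul _ _ h ?_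
    simp only [eval_T, zpow_one, coe_circleUnit, Complex.exp_ofReal_mul_I_re,
      Complex.exp_ofReal_mul_I_im]
    exact ⟨hcos, hsin⟩
  | h_C_mul_T_Z n a h =>
    rw [T_sub, ← mul_assoc]
    refine hmul _ _ h ?_
    simp only [eval_T, zpow_neg_one, ← conj_circleUnit, coe_circleUnit, Complex.conj_re,
      Complex.conj_im, Complex.exp_ofReal_mul_I_re, Complex.exp_ofReal_mul_I_im]
    exact ⟨hcos, Subalgebra.neg_mem _ hsin⟩

lemma Polynomial.exists_eval_eq_re_eval_ofReal (P : ℂ[X]) :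
    ∃ p : ℝ[X], ∀ x : ℝ, p.eval x = (P.eval (x : ℂ)).re := by
  induction P using Polynomial.induction_on' with
  | add p q hp hq =>
    obtain ⟨a, ha⟩ := hp
    obtain ⟨b, hb⟩ := hq
    exact ⟨a + b, fun x => by simp [ha, hb]⟩
  | monomial n a =>
    exact ⟨monomial n a.re, fun x => by
      rw [eval_monomial, eval_monomial, ← Complex.ofReal_pow, Complex.re_mul_ofReal]⟩

/-- The universal chord theorem for periodic functions: every length is the length of a chord. -/
lemma Continuous.exists_add_eq_of_periodic {w : ℝ → ℝ} (hw : Continuous w) {c : ℝ} (hc : 0 < c)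
    (hper : Function.Periodic w c) (δ : ℝ) : ∃ x, w (x + δ) = w x := by
  have hmax : ∃ x, ∀ y, w y ≤ w x := by
    obtain ⟨x, -, hx⟩ := isCompact_Icc.exists_isMaxOn (Set.nonempty_Icc.2 hc.le) hw.continuousOn
    refine ⟨x, fun y => ?_⟩
    obtain ⟨z, hz, hyz⟩ := hper.exists_mem_Ico₀ hc y
    rw [hyz]
    exact hx (Set.Ico_subset_Icc_self hz)
  have hmin : ∃ x, ∀ y, w x ≤ w y := by
    obtain ⟨x, -, hx⟩ := isCompact_Icc.exists_isMinOn (Set.nonempty_Icc.2 hc.le) hw.continuousOn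
    refine ⟨x, fun y => ?_⟩
    obtain ⟨z, hz, hyz⟩ := hper.exists_mem_Ico₀ hc y
    rw [hyz]
    exact hx (Set.Ico_subset_Icc_self hz)
  obtain ⟨a, ha⟩ := hmax
  obtain ⟨b, hb⟩ := hmin
  obtain ⟨x, hx⟩ := mem_range_of_exists_le_of_exists_ge
    (f := fun x => w (x + δ) - w x) (c := 0) (by fun_prop)
    ⟨a, sub_nonpos.2 (ha _)⟩ ⟨b, sub_nonneg.2 (hb _)⟩
  exact ⟨x, sub_eq_zero.1 hx⟩

open Filter

/-- The Laurent polynomials that agree at `x n` and `y n` for almost all `n`, with respect to a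
fixed nonprincipal ultrafilter. -/
noncomputable def agreeingSubalgebra (x y : ℕ → ℂˣ) : Subalgebra ℂ ℂ[T;T⁻¹] where
  carrier := {h | ∀ᶠ n in hyperfilter ℕ,
    LaurentPolynomial.eval (x n) h = LaurentPolynomial.eval (y n) h}
  mul_mem' {g h} hg hh := by
    filter_upwards [hg, hh] with n h1 h2
    rw [map_mul, map_mul, h1, h2]
  add_mem' {g h} hg hh := by
    filter_upwards [hg, hh] with n h1 h2
    rw [map_add, map_add, h1, h2]
  algebraMap_mem' r := by
    refine Eventually.of_forall fun n => ?_
    rw [← LaurentPolynomial.C_eq_algebraMap, LaurentPolynomial.eval_C, LaurentPolynomial.eval_C]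

lemma mem_agreeingSubalgebra {x y : ℕ → ℂˣ} {h : ℂ[T;T⁻¹]} :
    h ∈ agreeingSubalgebra x y ↔ ∀ᶠ n in hyperfilter ℕ,
      LaurentPolynomial.eval (x n) h = LaurentPolynomial.eval (y n) h := Iff.rfl

lemma mem_agreeingSubalgebra_of_mul_mem {x y : ℕ → ℂˣ}
    (hxy : Function.Injective fun n => x n / y n) {b e : ℂ[T;T⁻¹]}
    (hb : b ∈ agreeingSubalgebra x y) (hb0 : b ≠ 0) (heb : e * b ∈ agreeingSubalgebra x y) :
    e ∈ agreeingSubalgebra x y := by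
  have hfin : {n | LaurentPolynomial.eval (x n) b = 0 ∧
      LaurentPolynomial.eval (y n) b = 0}.Finite := by
    have hZ := finite_setOf_eval_eq_zero hb0
    refine ((hZ.prod hZ).image fun u => u.1 / u.2).preimage hxy.injOn |>.subset ?_
    intro n hn
    exact ⟨(x n, y n), ⟨hn.1, hn.2⟩, rfl⟩
  have hne := Filter.compl_mem_hyperfilter_of_finite hfin
  rw [mem_agreeingSubalgebra] at *
  filter_upwards [hb, heb, hne] with n h1 h2 h3
  rw [map_mul, map_mul, h1] at h2
  refine mul_right_cancel₀ (fun h0 => h3 ⟨h1.trans h0, h0⟩) h2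

lemma eq_zero_of_T_mem_agreeingSubalgebra {x y : ℕ → ℂˣ}
    (hxy : Function.Injective fun n => x n / y n) {i : ℤ}
    (hi : T i ∈ agreeingSubalgebra x y) : i = 0 := by
  by_contra hi0
  have hT : (T i - 1 : ℂ[T;T⁻¹]) ≠ 0 := by
    intro h
    rw [← T_zero, sub_eq_zero] at h
    have := congrArg (fun g => g.coeff i) h
    simp only [T_apply] at this
    simp [Ne.symm hi0] at this
  refine Filter.notMem_hyperfilter_of_finite
    ((finite_setOf_eval_eq_zero hT).preimage hxy.injOn) ?_
  filter_upwards [mem_agreeingSubalgebra.1 hi] with n hn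
  rw [eval_T, eval_T, Units.val_inj] at hn
  change LaurentPolynomial.eval (x n / y n) (T i - 1) = 0
  rw [map_sub, eval_T, map_one, div_zpow, hn, div_self', Units.val_one, sub_self]

end

/-- Weak composition condition implies strong composition condition. -/
theorem weak_implies_strong_composition
    (l m : ℝ → ℝ) (hl : IsTrigPoly l) (hm : IsTrigPoly m)
    (lt mt w : ℝ → ℝ)
    (hlt : Continuous lt) (hmt : Continuous mt) (hwc : Continuous w)
    (hper : ∀ θ : ℝ, w (θ + 2 * Real.pi) = w θ)
    (hcl : ∀ θ : ℝ, l θ = lt (w θ))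
    (hcm : ∀ θ : ℝ, m θ = mt (w θ)) :
    ∃ (p q : Polynomial ℝ) (w₀ : ℝ → ℝ), IsTrigPoly w₀ ∧
      (∀ θ : ℝ, l θ = p.eval (w₀ θ)) ∧ (∀ θ : ℝ, m θ = q.eval (w₀ θ)) := by
  obtain ⟨F, hF, hFl⟩ := hl.exists_laurentPolynomial
  obtain ⟨G, hG, hGm⟩ := hm.exists_laurentPolynomial
  by_cases hconst : (∃ a, F = LaurentPolynomial.C a) ∧ ∃ b, G = LaurentPolynomial.C b
  · obtain ⟨⟨a, rfl⟩, b, rfl⟩ := hconst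
    refine ⟨Polynomial.C a.re, Polynomial.C b.re, 0, Subalgebra.zero_mem _, fun θ => ?_,
      fun θ => ?_⟩
    · have := congrArg Complex.re (hFl θ)
      simpa using this.symm
    · have := congrArg Complex.re (hGm θ)
      simpa using this.symm
  choose x hx using hwc.exists_add_eq_of_periodic Real.two_pi_pos hper
  let δ : ℕ → ℝ := fun n => 1 / ((n : ℝ) + 1)
  have hinj : Function.Injective
      fun n => circleUnit (x (δ n) + δ n) / circleUnit (x (δ n)) := by
    have h1 : ∀ n, circleUnit (x (δ n) + δ n) / circleUnit (x (δ n)) = circleUnit (δ n) := by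
      intro n
      rw [circleUnit, circleUnit, circleUnit, Circle.exp_add, map_mul, mul_div_cancel_left]
    have hδ : ∀ n, δ n ∈ Set.Icc (0 : ℝ) 1 := fun n =>
      ⟨by positivity, by
        rw [div_le_one (by positivity)]
        linarith [n.cast_nonneg (α := ℝ)]⟩
    intro n k hnk
    simp only [h1] at hnk
    have h2 : Circle.exp (δ n) = Circle.exp (δ k) := by
      ext
      simpa only [coe_circleUnit, Circle.coe_exp] using congrArg Units.val hnk
    have h3 := Circle.exp_injOn_Icc (by linarith [Real.pi_gt_three]) (hδ n) (hδ k) h2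
    have h4 : (n : ℝ) + 1 = k + 1 := by simpa [δ] using h3
    exact_mod_cast add_right_cancel h4
  let B := agreeingSubalgebra (fun n => circleUnit (x (δ n) + δ n)) fun n => circleUnit (x (δ n))
  have hFB : F ∈ B := mem_agreeingSubalgebra.2 <| Filter.Eventually.of_forall fun n => by
    rw [hFl, hFl, hcl, hcl, hx]
  have hGB : G ∈ B := mem_agreeingSubalgebra.2 <| Filter.Eventually.of_forall fun n => by
    rw [hGm, hGm, hcm, hcm, hx]
  obtain ⟨f, hfB, hf, hfC⟩ : ∃ f ∈ B, LaurentPolynomial.conjInvert f = f ∧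
      ∀ a, f ≠ LaurentPolynomial.C a := by
    rcases not_and_or.1 hconst with h | h
    · exact ⟨F, hFB, hF, not_exists.1 h⟩
    · exact ⟨G, hGB, hG, not_exists.1 h⟩
  obtain ⟨ψ, hψ, hgen⟩ := LaurentPolynomial.exists_generator B
    (fun b hb hb0 e he => mem_agreeingSubalgebra_of_mul_mem hinj hb hb0 he)
    (fun n hn => eq_zero_of_T_mem_agreeingSubalgebra hinj hn)
    (fun h hh => by
      refine mem_agreeingSubalgebra.2 ?_
      filter_upwards [mem_agreeingSubalgebra.1 hh] with n hn
      rw [eval_circleUnit_conjInvert, eval_circleUnit_conjInvert, hn]) hfB hf hfC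
  have hreal : ∀ θ, LaurentPolynomial.eval (circleUnit θ) ψ =
      ((LaurentPolynomial.eval (circleUnit θ) ψ).re : ℂ) := fun θ => by
    refine (Complex.conj_eq_iff_re.1 ?_).symm
    rw [← eval_circleUnit_conjInvert, hψ]
  have hfactor : ∀ (g : ℝ → ℝ), ∀ H ∈ B,
      (∀ θ, LaurentPolynomial.eval (circleUnit θ) H = g θ) →
      ∃ p : Polynomial ℝ, ∀ θ, g θ = p.eval (LaurentPolynomial.eval (circleUnit θ) ψ).re := by
    intro g H hH hg
    obtain ⟨P, rfl⟩ := hgen H hH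
    obtain ⟨p, hp⟩ := P.exists_eval_eq_re_eval_ofReal
    refine ⟨p, fun θ => ?_⟩
    rw [hp, ← hreal, ← Complex.ofReal_re (g θ), ← hg, LaurentPolynomial.eval_aeval]
  obtain ⟨p, hp⟩ := hfactor l F hFB hFl
  obtain ⟨q, hq⟩ := hfactor m G hGB hGm
  exact ⟨p, q, _, (isTrigPoly_re_im_eval ψ).1, hp, hq⟩
end

section
/- Let l̂ and m̂ be trigonometric polynomials and set l(θ) = ∫₀^θ l̂(s) ds and m(θ) = ∫₀^θ m̂(s) ds. Assume there exist continuously differentiable functions l̃, m̃, w : ℝ → ℝ with w 2π-periodic such that l(θ) = l̃(w(θ)) and m(θ) = m̃(w(θ)) for all θ. Then there exists ε > 0 such that every differentiable function y : ℝ → ℝ satisfying the Abel differential equation y′(θ) = l̂(θ)·y(θ)³ + m̂(θ)·y(θ)² for all θ ∈ [0, 2π] and |y(0)| < ε satisfies y(2π) = y(0). -/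
open Set Metric
open scoped NNReal

/-- Trigonometric polynomials are continuous. -/
theorem IsTrigPoly.continuous {f : ℝ → ℝ} (hf : IsTrigPoly f) : Continuous f := by
  induction hf using Algebra.adjoin_induction with
  | mem g hg =>
    rcases hg with rfl | rfl
    · exact Real.continuous_sin
    · exact Real.continuous_cos
  | algebraMap r => exact continuous_const
  | add g h _ _ hg hh => exact hg.add hh
  | mul g h _ _ hg hh => exact hg.mul hh

/-- Two continuous functions have a common bound on a compact interval. -/
theorem exists_nnreal_bound_Icc {p q : ℝ → ℝ} (hp : Continuous p) (hq : Continuous q) (a b : ℝ) :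
    ∃ C : ℝ≥0, ∀ t ∈ Icc a b, |p t| ≤ C ∧ |q t| ≤ C := by
  obtain ⟨C, hC⟩ := isCompact_Icc.exists_bound_of_continuousOn (hp.prodMk hq).continuousOn
    (s := Icc a b)
  refine ⟨C.toNNReal, fun t ht => ?_⟩
  have h := (hC t ht).trans (Real.le_coe_toNNReal C)
  exact ⟨(norm_fst_le _).trans h, (norm_snd_le _).trans h⟩

/-- The Abel vector field `x ↦ a x³ + b x²` is Lipschitz on bounded balls. -/
theorem lipschitzOnWith_abel {a b : ℝ} {C M : ℝ≥0} (ha : |a| ≤ C) (hb : |b| ≤ C) :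
    LipschitzOnWith (C * (3 * M ^ 2 + 2 * M)) (fun x : ℝ => a * x ^ 3 + b * x ^ 2)
      (closedBall 0 M) := by
  refine LipschitzOnWith.of_dist_le_mul fun x hx y hy => ?_
  rw [mem_closedBall_zero_iff, Real.norm_eq_abs] at hx hy
  rw [Real.dist_eq, Real.dist_eq]
  have hfactor : a * x ^ 3 + b * x ^ 2 - (a * y ^ 3 + b * y ^ 2) =
      (a * (x * x + x * y + y * y) + b * (x + y)) * (x - y) := by ring
  rw [hfactor, abs_mul]
  gcongr
  calc |a * (x * x + x * y + y * y) + b * (x + y)|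
      ≤ |a| * (|x| * |x| + |x| * |y| + |y| * |y|) + |b| * (|x| + |y|) := by
        refine (abs_add_le _ _).trans ?_
        rw [abs_mul, abs_mul, ← abs_mul x x, ← abs_mul x y, ← abs_mul y y]
        gcongr
        · exact abs_add_three _ _ _
        · exact abs_add_le _ _
    _ ≤ C * (M * M + M * M + M * M) + C * (M + M) := by gcongr
    _ = ((C * (3 * M ^ 2 + 2 * M) : ℝ≥0) : ℝ) := by push_cast; ring

/-- The Abel equation `u' = p u³ + q u²` with continuous coefficients is solvable on any prescribed
bounded interval, provided the initial value is small enough. -/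
theorem exists_abel_solution {p q : ℝ → ℝ} (hp : Continuous p) (hq : Continuous q)
    (t₀ : ℝ) {R : ℝ} (hR : 0 < R) :
    ∃ ε > (0 : ℝ), ∀ c : ℝ, |c| < ε → ∃ u : ℝ → ℝ, u t₀ = c ∧
      ∀ t ∈ Ioo (t₀ - R) (t₀ + R), HasDerivAt u (p t * u t ^ 3 + q t * u t ^ 2) t := by
  obtain ⟨C, hC⟩ := exists_nnreal_bound_Icc hp hq (t₀ - R) (t₀ + R)
  lift R to ℝ≥0 using hR.le
  obtain ⟨δ, hδ⟩ : ∃ δ : ℝ≥0, δ = (1 + 4 * C * R)⁻¹ := ⟨_, rfl⟩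
  have hδpos : 0 < δ := by rw [hδ]; positivity
  have hδmul : (δ : ℝ) * (1 + 4 * C * R) = 1 := by
    rw [hδ]; push_cast; exact inv_mul_cancel₀ (by positivity)
  have hδle : (δ : ℝ) ≤ 1 := by
    have : 0 ≤ (δ : ℝ) * (4 * C * R) := by positivity
    linarith
  have hPL : IsPicardLindelof (fun t x => p t * x ^ 3 + q t * x ^ 2)
      (⟨t₀, by constructor <;> linarith⟩ : Icc (t₀ - R) (t₀ + R)) 0 δ (δ / 2)
      (2 * C * δ ^ 2) (C * (3 * δ ^ 2 + 2 * δ)) := by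
    refine ⟨fun t ht => lipschitzOnWith_abel (hC t ht).1 (hC t ht).2,
      fun x _ => by fun_prop, fun t ht x hx => ?_, ?_⟩
    · rw [mem_closedBall_zero_iff, Real.norm_eq_abs] at hx
      calc ‖p t * x ^ 3 + q t * x ^ 2‖ ≤ |p t| * |x| ^ 3 + |q t| * |x| ^ 2 := by
            refine (norm_add_le _ _).trans_eq ?_
            simp
        _ ≤ C * (δ : ℝ) ^ 3 + C * (δ : ℝ) ^ 2 := by
            gcongr
            exacts [(hC t ht).1, (hC t ht).2]
        _ ≤ C * (δ : ℝ) ^ 2 + C * (δ : ℝ) ^ 2 := by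
            gcongr ?_ + _
            gcongr C * ?_
            exact pow_le_pow_of_le_one δ.coe_nonneg hδle (by norm_num)
        _ = ((2 * C * δ ^ 2 : ℝ≥0) : ℝ) := by push_cast; ring
    · have hmax : max (t₀ + R - t₀) (t₀ - (t₀ - R)) = (R : ℝ) := by simp
      push_cast
      rw [hmax]
      have : (δ : ℝ) * (δ * (1 + 4 * C * R)) = δ := by rw [hδmul, mul_one]
      nlinarith [sq_nonneg (δ : ℝ)]
  refine ⟨δ / 2, by positivity, fun c hc => ?_⟩
  obtain ⟨u, hu0, hu⟩ := hPL.exists_eq_forall_mem_Icc_hasDerivWithinAt (x := c)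
    (by rw [mem_closedBall_zero_iff, Real.norm_eq_abs]; push_cast; exact hc.le)
  exact ⟨u, hu0, fun t ht =>
    (hu t (Ioo_subset_Icc_self ht)).hasDerivAt (Icc_mem_nhds ht.1 ht.2)⟩

/-- Solutions of the Abel equation on a compact interval are determined by their initial value. -/
theorem abel_solution_unique {p q : ℝ → ℝ} (hp : Continuous p) (hq : Continuous q) {a b : ℝ}
    {y z : ℝ → ℝ}
    (hy : ∀ t ∈ Icc a b, HasDerivAt y (p t * y t ^ 3 + q t * y t ^ 2) t)
    (hz : ∀ t ∈ Icc a b, HasDerivAt z (p t * z t ^ 3 + q t * z t ^ 2) t)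
    (hyz : y a = z a) : EqOn y z (Icc a b) := by
  obtain ⟨C, hC⟩ := exists_nnreal_bound_Icc hp hq a b
  have hyc : ContinuousOn y (Icc a b) := fun t ht => (hy t ht).continuousAt.continuousWithinAt
  have hzc : ContinuousOn z (Icc a b) := fun t ht => (hz t ht).continuousAt.continuousWithinAt
  obtain ⟨M, hM⟩ := isCompact_Icc.exists_bound_of_continuousOn (hyc.prodMk hzc)
  have hM' := fun t ht => (hM t ht).trans (Real.le_coe_toNNReal M)
  exact ODE_solution_unique_of_mem_Icc_right (s := fun _ => closedBall 0 M.toNNReal)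
    (fun t ht => lipschitzOnWith_abel (hC t (Ico_subset_Icc_self ht)).1
      (hC t (Ico_subset_Icc_self ht)).2)
    hyc (fun t ht => (hy t (Ico_subset_Icc_self ht)).hasDerivWithinAt)
    (fun t ht => mem_closedBall_zero_iff.2
      ((norm_fst_le _).trans (hM' t (Ico_subset_Icc_self ht))))
    hzc (fun t ht => (hz t (Ico_subset_Icc_self ht)).hasDerivWithinAt)
    (fun t ht => mem_closedBall_zero_iff.2
      ((norm_snd_le _).trans (hM' t (Ico_subset_Icc_self ht))))
    hyz

/-- If a primitive of `f` factors as `g ∘ w`, then `f` is given by the chain rule. -/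
theorem eq_deriv_mul_deriv_of_integral_eq_comp {f g w : ℝ → ℝ} (hf : Continuous f)
    (hg : Differentiable ℝ g) (hw : Differentiable ℝ w)
    (h : ∀ θ : ℝ, ∫ s in (0 : ℝ)..θ, f s = g (w θ)) (θ : ℝ) :
    f θ = deriv g (w θ) * deriv w θ := by
  have hint : HasDerivAt (fun t => ∫ s in (0 : ℝ)..t, f s) (f θ) θ :=
    (hf.integral_hasStrictDerivAt 0 θ).hasDerivAt
  rw [funext h] at hint
  exact hint.unique ((hg (w θ)).hasDerivAt.comp θ (hw θ).hasDerivAt)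

/-- The composition condition implies that the Abel differential equation
`y' = l̂ y³ + m̂ y²` has a center: all solutions with small enough initial value
are `2π`-periodic over `[0, 2π]`. -/
theorem composition_condition_implies_center
    (lhat mhat : ℝ → ℝ) (hlhat : IsTrigPoly lhat) (hmhat : IsTrigPoly mhat)
    (l m : ℝ → ℝ)
    (hl : ∀ θ : ℝ, l θ = ∫ s in (0:ℝ)..θ, lhat s)
    (hm : ∀ θ : ℝ, m θ = ∫ s in (0:ℝ)..θ, mhat s)
    (lt mt w : ℝ → ℝ)
    (hlt : ContDiff ℝ 1 lt) (hmt : ContDiff ℝ 1 mt) (hw : ContDiff ℝ 1 w)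
    (hper : ∀ θ : ℝ, w (θ + 2 * Real.pi) = w θ)
    (hcl : ∀ θ : ℝ, l θ = lt (w θ))
    (hcm : ∀ θ : ℝ, m θ = mt (w θ)) :
    ∃ ε > (0:ℝ), ∀ y : ℝ → ℝ, Differentiable ℝ y →
      (∀ θ ∈ Set.Icc (0:ℝ) (2 * Real.pi),
        deriv y θ = lhat θ * (y θ) ^ 3 + mhat θ * (y θ) ^ 2) →
      |y 0| < ε → y (2 * Real.pi) = y 0 := by
  have hl' := eq_deriv_mul_deriv_of_integral_eq_comp hlhat.continuous
    (hlt.differentiable one_ne_zero) (hw.differentiable one_ne_zero)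
    fun θ => (hl θ).symm.trans (hcl θ)
  have hm' := eq_deriv_mul_deriv_of_integral_eq_comp hmhat.continuous
    (hmt.differentiable one_ne_zero) (hw.differentiable one_ne_zero)
    fun θ => (hm θ).symm.trans (hcm θ)
  obtain ⟨R, hR⟩ := (isCompact_Icc (a := (0 : ℝ)) (b := 2 * Real.pi)).exists_bound_of_continuousOn
    (hw.continuous.sub (continuous_const (y := w 0))).continuousOn
  have h2π : (0 : ℝ) ≤ 2 * Real.pi := by positivity
  have hRnonneg : 0 ≤ R := (norm_nonneg _).trans (hR 0 (left_mem_Icc.2 h2π))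
  obtain ⟨ε, hε, hsol⟩ := exists_abel_solution (hlt.continuous_deriv le_rfl)
    (hmt.continuous_deriv le_rfl) (w 0) (R := R + 1) (by positivity)
  refine ⟨ε, hε, fun y hy hode hy0 => ?_⟩
  obtain ⟨u, hu0, hu⟩ := hsol (y 0) hy0
  have huw : ∀ θ ∈ Icc (0 : ℝ) (2 * Real.pi), HasDerivAt (u ∘ w)
      (lhat θ * (u ∘ w) θ ^ 3 + mhat θ * (u ∘ w) θ ^ 2) θ := by
    intro θ hθ
    have hbound : -R ≤ w θ - w 0 ∧ w θ - w 0 ≤ R := abs_le.1 (hR θ hθ)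
    have hmem : w θ ∈ Ioo (w 0 - (R + 1)) (w 0 + (R + 1)) := by
      constructor <;> linarith [hbound.1, hbound.2]
    refine ((hu _ hmem).comp θ (hw.differentiable one_ne_zero θ).hasDerivAt).congr_deriv ?_
    rw [hl', hm', Function.comp_apply]
    ring
  have heq := abel_solution_unique hlhat.continuous hmhat.continuous
    (fun θ hθ => hode θ hθ ▸ (hy θ).hasDerivAt) huw hu0.symm (right_mem_Icc.2 h2π)
  have hw2π : w (2 * Real.pi) = w 0 := by simpa using hper 0
  rw [heq, Function.comp_apply, hw2π, hu0]
end

section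
/- Let l and m be nonconstant trigonometric polynomials, and assume there exist continuous functions l̃, m̃, w : ℝ → ℝ with w 2π-periodic such that l(θ) = l̃(w(θ)) and m(θ) = m̃(w(θ)) for all θ. Then for every integer n ≥ 1 there do NOT exist two-variable real polynomials P, Q ∈ ℝ[X, Y] such that the function θ ↦ Q(l(θ), m(θ)) is not identically zero and tan(nθ/2)·Q(l(θ), m(θ)) = P(l(θ), m(θ)) for all θ ∈ ℝ with cos(nθ/2) ≠ 0. In other words, tan(nθ/2) cannot be expressed as a rational function u(l, m) of l and m with real coefficients. -/
open Filter Topology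

theorem IsTrigPoly.analyticOnNhd {f : ℝ → ℝ} (hf : IsTrigPoly f) :
    AnalyticOnNhd ℝ f Set.univ := by
  induction hf using Algebra.adjoin_induction with
  | mem g hg =>
    rcases hg with rfl | rfl
    · exact Real.analyticOnNhd_sin
    · exact Real.analyticOnNhd_cos
  | algebraMap r => exact analyticOnNhd_const
  | add f g _ _ hf hg => exact hf.add hg
  | mul f g _ _ hf hg => exact hf.mul hg

theorem AnalyticOnNhd.eval_mvPolynomial_fin_two {l m : ℝ → ℝ}
    (hl : AnalyticOnNhd ℝ l Set.univ) (hm : AnalyticOnNhd ℝ m Set.univ)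
    (p : MvPolynomial (Fin 2) ℝ) :
    AnalyticOnNhd ℝ (fun θ => MvPolynomial.eval ![l θ, m θ] p) Set.univ := by
  induction p using MvPolynomial.induction_on with
  | C r => simpa using analyticOnNhd_const
  | add p q hp hq => simpa [Pi.add_def] using hp.add hq
  | mul_X p i hp =>
    fin_cases i
    · simpa using hp.mul hl
    · simpa using hp.mul hm

/-- Clearing denominators in `tan (c * θ) * q θ = p θ` for analytic `p` and `q`: the cleared
equation also holds at the poles of `tan`. -/
theorem sin_mul_eq_cos_mul_of_tan_mul_eq {c : ℝ} {p q : ℝ → ℝ}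
    (hp : AnalyticOnNhd ℝ p Set.univ) (hq : AnalyticOnNhd ℝ q Set.univ)
    (h : ∀ θ, Real.cos (c * θ) ≠ 0 → Real.tan (c * θ) * q θ = p θ) (θ : ℝ) :
    Real.sin (c * θ) * q θ = Real.cos (c * θ) * p θ := by
  have hlin : AnalyticOnNhd ℝ (fun θ : ℝ => c * θ) Set.univ :=
    analyticOnNhd_const.mul analyticOnNhd_id
  have hcos : AnalyticOnNhd ℝ (fun θ => Real.cos (c * θ)) Set.univ :=
    Real.analyticOnNhd_cos.comp hlin (Set.mapsTo_univ _ _)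
  have hsin : AnalyticOnNhd ℝ (fun θ => Real.sin (c * θ)) Set.univ :=
    Real.analyticOnNhd_sin.comp hlin (Set.mapsTo_univ _ _)
  have hev : (fun θ => Real.sin (c * θ) * q θ) =ᶠ[𝓝 0] fun θ => Real.cos (c * θ) * p θ := by
    have hne : ∀ᶠ θ in 𝓝 (0 : ℝ), Real.cos (c * θ) ≠ 0 :=
      (hcos 0 trivial).continuousAt.eventually_ne (by simp)
    filter_upwards [hne] with θ hθ
    rw [← h θ hθ, Real.tan_eq_sin_div_cos]
    field_simp
  exact congrFun ((hsin.mul hq).eq_of_eventuallyEq (hcos.mul hp) hev) θ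

theorem AnalyticOnNhd.eventually_ne_zero_nhdsWithin {q : ℝ → ℝ}
    (hq : AnalyticOnNhd ℝ q Set.univ) (hne : ¬ ∀ θ, q θ = 0) (x : ℝ) :
    ∀ᶠ θ in 𝓝[≠] x, q θ ≠ 0 :=
  (hq x trivial).eventually_eq_zero_or_eventually_ne_zero.resolve_left fun h =>
    hne fun θ => congrFun (hq.eq_of_eventuallyEq analyticOnNhd_const h) θ

/-- Around a maximum, a continuous function repeats a value taken at a nonzero of `q`. -/
theorem exists_eq_near_isMax {w q : ℝ → ℝ} (hw : Continuous w) {x : ℝ} (hx : ∀ y, w y ≤ w x)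
    (hq : ∀ᶠ θ in 𝓝[≠] x, q θ ≠ 0) {ε : ℝ} (hε : 0 < ε) :
    ∃ a b, a < b ∧ b - a < ε ∧ w a = w b ∧ (q a ≠ 0 ∨ q b ≠ 0) := by
  obtain ⟨δ, hδ, hball⟩ := Metric.eventually_nhds_iff.1 (eventually_nhdsWithin_iff.1 hq)
  set r := min δ ε / 3 with hr
  have hr0 : 0 < r := by positivity
  have hrδ : r < δ := by have := min_le_left δ ε; linarith
  have hrε : 2 * r < ε := by have := min_le_right δ ε; linarith
  have hleft : q (x - r) ≠ 0 :=
    hball (by simpa [Real.dist_eq, abs_of_pos hr0] using hrδ) (by simp [hr0.ne'])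
  have hright : q (x + r) ≠ 0 :=
    hball (by simpa [Real.dist_eq, abs_of_pos hr0] using hrδ) (by simp [hr0.ne'])
  rcases le_total (w (x - r)) (w (x + r)) with h | h
  · obtain ⟨t, ⟨ht₁, ht₂⟩, ht⟩ :=
      intermediate_value_Icc (show x - r ≤ x by linarith) hw.continuousOn ⟨h, hx _⟩
    exact ⟨t, x + r, by linarith, by linarith, ht, Or.inr hright⟩
  · obtain ⟨t, ⟨ht₁, ht₂⟩, ht⟩ :=
      intermediate_value_Icc' (show x ≤ x + r by linarith) hw.continuousOn ⟨h, hx _⟩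
    exact ⟨x - r, t, by linarith, by linarith, ht.symm, Or.inl hleft⟩

/-- If nonconstant trigonometric polynomials `l, m` satisfy the composition
condition, then `tan (nθ/2)` is not a rational function of `l` and `m`. -/
theorem tan_not_rational_in_l_m
    (l m : ℝ → ℝ) (hl : IsTrigPoly l) (hm : IsTrigPoly m)
    (hlnc : ¬ ∃ c : ℝ, ∀ θ : ℝ, l θ = c)
    (hmnc : ¬ ∃ c : ℝ, ∀ θ : ℝ, m θ = c)
    (lt mt w : ℝ → ℝ)
    (hlt : Continuous lt) (hmt : Continuous mt) (hwc : Continuous w)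
    (hper : ∀ θ : ℝ, w (θ + 2 * Real.pi) = w θ)
    (hcl : ∀ θ : ℝ, l θ = lt (w θ))
    (hcm : ∀ θ : ℝ, m θ = mt (w θ)) :
    ∀ n : ℕ, 1 ≤ n →
      ¬ ∃ P Q : MvPolynomial (Fin 2) ℝ,
        (¬ ∀ θ : ℝ, MvPolynomial.eval ![l θ, m θ] Q = 0) ∧
        (∀ θ : ℝ, Real.cos (n * θ / 2) ≠ 0 →
          Real.tan (n * θ / 2) * MvPolynomial.eval ![l θ, m θ] Q =
            MvPolynomial.eval ![l θ, m θ] P) := by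
  rintro n hn ⟨P, Q, hQ, htan⟩
  have hn0 : (0 : ℝ) < n := by exact_mod_cast hn
  have analytic := hl.analyticOnNhd.eval_mvPolynomial_fin_two hm.analyticOnNhd
  have hclear := sin_mul_eq_cos_mul_of_tan_mul_eq (c := n / 2) (analytic P) (analytic Q)
    fun θ => by simpa only [div_mul_eq_mul_div] using htan θ
  obtain ⟨x, hx⟩ : ∃ x, ∀ y, w y ≤ w x := by
    obtain ⟨x, -, hx⟩ := isCompact_Icc.exists_isMaxOn
      (Set.nonempty_Icc.2 Real.two_pi_pos.le) hwc.continuousOn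
    refine ⟨x, fun y => ?_⟩
    obtain ⟨z, hz, hyz⟩ := Function.Periodic.exists_mem_Ico₀ hper Real.two_pi_pos y
    exact hyz ▸ hx (Set.Ico_subset_Icc_self hz)
  obtain ⟨a, b, hab, hlt_eps, hw, hne⟩ := exists_eq_near_isMax hwc hx
    ((analytic Q).eventually_ne_zero_nhdsWithin hQ x) (ε := 2 * Real.pi / n) (by positivity)
  have hpair : ![l a, m a] = ![l b, m b] := by rw [hcl, hcm, hcl, hcm, hw]
  have ha := hclear a
  have hb := hclear b
  simp only [hpair, or_self] at ha hne
  have hsin : Real.sin (n / 2 * b - n / 2 * a) = 0 := by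
    refine (mul_eq_zero.1 ?_).resolve_right hne
    rw [Real.sin_sub]
    linear_combination Real.cos (n / 2 * a) * hb - Real.cos (n / 2 * b) * ha
  refine (Real.sin_pos_of_pos_of_lt_pi ?_ ?_).ne' hsin
  · rw [← mul_sub]
    exact mul_pos (by positivity) (sub_pos.2 hab)
  · rw [lt_div_iff₀ hn0] at hlt_eps
    linarith
end

section
/- Let w : ℝ → ℝ be a continuous 2π-periodic function (w(θ + 2π) = w(θ) for all θ) and let n ≥ 1 be an integer. Then there exist real numbers θ₁, θ₂ such that w(θ₁) = w(θ₂) but θ₁ − θ₂ is not an integer multiple of 2π/n. -/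
/-- A continuous periodic real function takes equal values at two points at any prescribed
distance `a`. -/
theorem Function.Periodic.exists_apply_add_eq {f : ℝ → ℝ} {c : ℝ} (hf : Function.Periodic f c)
    (hc : 0 < c) (hcont : Continuous f) (a : ℝ) : ∃ x, f (x + a) = f x := by
  have hne : (Set.Icc 0 c).Nonempty := Set.nonempty_Icc.2 hc.le
  obtain ⟨M, -, hM⟩ := isCompact_Icc.exists_isMaxOn hne hcont.continuousOn
  obtain ⟨m, -, hm⟩ := isCompact_Icc.exists_isMinOn hne hcont.continuousOn
  have hmax : f (M + a) ≤ f M := by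
    obtain ⟨y, hy, hfy⟩ := hf.exists_mem_Ico₀ hc (M + a)
    exact hfy ▸ hM (Set.Ico_subset_Icc_self hy)
  have hmin : f m ≤ f (m + a) := by
    obtain ⟨y, hy, hfy⟩ := hf.exists_mem_Ico₀ hc (m + a)
    exact hfy ▸ hm (Set.Ico_subset_Icc_self hy)
  exact mem_range_of_exists_le_of_exists_ge (f := fun x => f (x + a) - f x) (c := 0)
    (by fun_prop) ⟨M, sub_nonpos.2 hmax⟩ ⟨m, sub_nonneg.2 hmin⟩ |>.imp fun _ => sub_eq_zero.1

/-- A continuous `2π`-periodic function takes the same value at two points whose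
difference is not an integer multiple of `2π/n`. -/
theorem exists_eq_value_not_multiple
    (w : ℝ → ℝ) (hw : Continuous w)
    (hper : ∀ θ : ℝ, w (θ + 2 * Real.pi) = w θ)
    (n : ℕ) (hn : 1 ≤ n) :
    ∃ θ₁ θ₂ : ℝ, w θ₁ = w θ₂ ∧ ¬ ∃ k : ℤ, θ₁ - θ₂ = k * (2 * Real.pi / n) := by
  obtain ⟨x, hx⟩ := Function.Periodic.exists_apply_add_eq hper Real.two_pi_pos hw (Real.pi / n)
  refine ⟨x + Real.pi / n, x, hx, ?_⟩
  rintro ⟨k, hk⟩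
  have hpos : Real.pi / n ≠ 0 := div_ne_zero Real.pi_ne_zero (by positivity)
  have hk' : (1 : ℝ) = 2 * k := mul_right_cancel₀ hpos (by linear_combination hk)
  have : (1 : ℤ) = 2 * k := by exact_mod_cast hk'
  omega
end

section
/- Let σ : ℂ(z) → ℂ(z) be the field automorphism of the field of rational functions over ℂ that applies complex conjugation to all coefficients and substitutes z ↦ 1/z (so σ(R)(z) = conj-coefficients of R evaluated at 1/z), and let ℒ_ℝ(z) denote the fixed subfield {R ∈ ℂ(z) : σ(R) = R}, which contains ℝ. Call an element of ℂ(z) 'Laurent' if it can be written as P(z)/z^m for some polynomial P ∈ ℂ[z] and integer m ≥ 0. For n ≥ 1 set T_n = −i·(z^n − 1)/(z^n + 1) ∈ ℒ_ℝ(z). Then for any subfield K with ℝ ⊆ K ⊆ ℒ_ℝ(z) containing at least one nonconstant Laurent element of ℒ_ℝ(z), either K is the subfield generated over ℝ by T_n for some integer n ≥ 1, or K is the subfield generated over ℝ by a single nonconstant Laurent element B ∈ ℒ_ℝ(z). -/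
/-- A rational function is 'Laurent' if it can be written as `P(z)/z^m`. -/
def IsLaurentRF (R : RatFunc ℂ) : Prop :=
  ∃ (P : Polynomial ℂ) (m : ℕ),
    R = algebraMap (Polynomial ℂ) (RatFunc ℂ) P / RatFunc.X ^ m

/-- The rational function `T_n = -i·(z^n - 1)/(z^n + 1)`. -/
noncomputable def Tn (n : ℕ) : RatFunc ℂ :=
  RatFunc.C (-Complex.I) * (RatFunc.X ^ n - 1) / (RatFunc.X ^ n + 1)

open Polynomial IntermediateField

namespace IsLaurentRF

theorem algebraMap_polynomial (P : ℂ[X]) : IsLaurentRF (algebraMap ℂ[X] (RatFunc ℂ) P) :=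
  ⟨P, 0, by simp⟩

theorem const (c : ℂ) : IsLaurentRF (RatFunc.C c) := by
  rw [← RatFunc.algebraMap_C]
  exact algebraMap_polynomial _

theorem X_inv : IsLaurentRF (RatFunc.X⁻¹) := ⟨1, 1, by simp⟩

theorem add {R S : RatFunc ℂ} (hR : IsLaurentRF R) (hS : IsLaurentRF S) :
    IsLaurentRF (R + S) := by
  obtain ⟨P, m, rfl⟩ := hR
  obtain ⟨Q, l, rfl⟩ := hS
  refine ⟨P * X ^ l + X ^ m * Q, m + l, ?_⟩
  have hX : (RatFunc.X : RatFunc ℂ) ≠ 0 := RatFunc.X_ne_zero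
  rw [div_add_div _ _ (pow_ne_zero _ hX) (pow_ne_zero _ hX), pow_add]
  simp [RatFunc.algebraMap_X]

theorem mul {R S : RatFunc ℂ} (hR : IsLaurentRF R) (hS : IsLaurentRF S) :
    IsLaurentRF (R * S) := by
  obtain ⟨P, m, rfl⟩ := hR
  obtain ⟨Q, l, rfl⟩ := hS
  exact ⟨P * Q, m + l, by rw [div_mul_div_comm, pow_add, map_mul]⟩

theorem pow {R : RatFunc ℂ} (hR : IsLaurentRF R) (n : ℕ) : IsLaurentRF (R ^ n) := by
  induction n with
  | zero => simpa using const 1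
  | succ n ih => rw [pow_succ]; exact ih.mul hR

/-- A rational function that a polynomial relation exhibits as integral over a Laurent element
is Laurent. -/
theorem of_aeval_eq_mul {B S : RatFunc ℂ} (hB : IsLaurentRF B) {U V : ℂ[X]}
    (hdeg : V.degree < U.degree) (h : aeval S U = B * aeval S V) : IsLaurentRF S := by
  obtain ⟨b, m, rfl⟩ := hB
  have hX : (RatFunc.X : RatFunc ℂ) ≠ 0 := RatFunc.X_ne_zero
  have hU : U ≠ 0 := by rintro rfl; simp at hdeg
  set p : ℂ[X][X] := C (X ^ m) * U.map C - C b * V.map C with hp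
  have haeval : ∀ W : ℂ[X], aeval S (W.map (C : ℂ →+* ℂ[X])) = aeval S W := fun W => by
    rw [← Polynomial.algebraMap_eq, aeval_map_algebraMap]
  have hroot : aeval S p = 0 := by
    simp only [hp, map_sub, map_mul, aeval_C, haeval, h, map_pow, RatFunc.algebraMap_X]
    field_simp
    ring
  have hlead : p.leadingCoeff = X ^ m * C U.leadingCoeff := by
    rw [hp, leadingCoeff_sub_of_degree_lt]
    · simp
    · refine lt_of_le_of_lt (b := V.degree) ?_ ?_
      · rw [degree_mul, degree_map]
        exact (add_le_add_left degree_C_le _).trans (by simp)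
      · rw [degree_C_mul (pow_ne_zero _ X_ne_zero), degree_map]
        exact hdeg
  obtain ⟨k, hk⟩ := den_dvd_of_is_root hroot
  rw [hlead] at hk
  have hc : RatFunc.C U.leadingCoeff ≠ 0 := by simpa using hU
  have hden : algebraMap ℂ[X] (RatFunc ℂ) (IsFractionRing.den ℂ[X] S) ≠ 0 := by
    simp
  have hk' := congrArg (algebraMap ℂ[X] (RatFunc ℂ)) hk
  simp only [map_mul, map_pow, RatFunc.algebraMap_X, RatFunc.algebraMap_C] at hk'
  refine ⟨IsFractionRing.num ℂ[X] S * k * C (U.leadingCoeff)⁻¹, m, ?_⟩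
  have hS := IsFractionRing.mk'_num_den ℂ[X] S
  rw [IsFractionRing.mk'_eq_div] at hS
  rw [eq_div_iff (pow_ne_zero _ hX), map_mul, map_mul, RatFunc.algebraMap_C, map_inv₀]
  rw [eq_mul_inv_iff_mul_eq₀ hc, mul_assoc, hk', ← mul_assoc]
  nth_rw 1 [← hS]
  rw [div_mul_cancel₀ _ hden]

/-- The units of the ring of Laurent elements are the monomials. -/
theorem exists_eq_C_mul_zpow {R S : RatFunc ℂ} (hR : IsLaurentRF R) (hS : IsLaurentRF S)
    {c : ℂ} (hc : c ≠ 0) (h : R * S = RatFunc.C c) :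
    ∃ (a : ℂ) (k : ℤ), a ≠ 0 ∧ R = RatFunc.C a * RatFunc.X ^ k := by
  obtain ⟨P, m, rfl⟩ := hR
  obtain ⟨Q, l, rfl⟩ := hS
  have hX : (RatFunc.X : RatFunc ℂ) ≠ 0 := RatFunc.X_ne_zero
  have hPQ : P * Q = C c * X ^ (m + l) := by
    apply RatFunc.algebraMap_injective ℂ
    rw [div_mul_div_comm, ← pow_add, div_eq_iff (pow_ne_zero _ hX)] at h
    simpa [RatFunc.algebraMap_X] using h
  have hdvd : P ∣ X ^ (m + l) := ⟨Q * C c⁻¹, by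
    rw [← mul_assoc, hPQ, mul_right_comm, ← C_mul, mul_inv_cancel₀ hc, C_1, one_mul]⟩
  obtain ⟨i, -, hi⟩ := (dvd_prime_pow prime_X _).1 hdvd
  obtain ⟨u, hu⟩ := hi.symm
  obtain ⟨a, ha, hau⟩ := Polynomial.isUnit_iff.1 u.isUnit
  refine ⟨a, i - m, ha.ne_zero, ?_⟩
  rw [← hu, ← hau, map_mul, map_pow, RatFunc.algebraMap_X, RatFunc.algebraMap_C,
    zpow_sub₀ hX, zpow_natCast, zpow_natCast]
  ring

end IsLaurentRF

/-- A Laurent element of `ℂ(R)` that is not constant forces `ℂ(R)` to have a Laurent generator. -/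
theorem exists_isLaurentRF_adjoin_eq {B R : RatFunc ℂ} (hB : IsLaurentRF B)
    (hBc : ¬ ∃ c : ℂ, B = RatFunc.C c) (hR : ¬ ∃ c : ℂ, R = RatFunc.C c) (hBR : B ∈ ℂ⟮R⟯) :
    ∃ S : RatFunc ℂ, IsLaurentRF S ∧ ℂ⟮S⟯ = ℂ⟮R⟯ := by
  have htr := RatFunc.transcendental_of_ne_C R hR
  obtain ⟨g, hg⟩ := (RatFunc.algEquivOfTranscendental R htr).surjective ⟨B, hBR⟩
  have hBg : B = aeval R g.num / aeval R g.denom := by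
    rw [← RatFunc.algEquivOfTranscendental_apply R htr, hg]
  have hden : aeval R g.denom ≠ 0 := fun h =>
    g.denom_ne_zero ((transcendental_iff.1 htr) _ h)
  have hrel : aeval R g.num = B * aeval R g.denom := by rw [hBg, div_mul_cancel₀ _ hden]
  rcases lt_or_ge g.denom.degree g.num.degree with hlt | hge
  · exact ⟨R, hB.of_aeval_eq_mul hlt hrel, rfl⟩
  have hdeg : g.denom.degree ≠ 0 := by
    intro h0
    rw [eq_C_of_degree_le_zero h0.le, eq_C_of_degree_le_zero (hge.trans h0.le)] at hBg
    refine hBc ⟨g.num.coeff 0 / g.denom.coeff 0, ?_⟩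
    rw [hBg]
    simp [RatFunc.algebraMap_eq_C]
  obtain ⟨a, ha⟩ := IsAlgClosed.exists_root g.denom hdeg
  have hnum : g.num.eval a ≠ 0 := by
    have := aeval_ne_zero_of_isCoprime g.isCoprime_num_denom a
    simpa [coe_aeval_eq_eval, ha.eq_zero] using this
  set T := R - RatFunc.C a with hT
  have hT0 : T ≠ 0 := fun h => hR ⟨a, sub_eq_zero.1 h⟩
  have hCa : ∀ F : IntermediateField ℂ (RatFunc ℂ), RatFunc.C a ∈ F := fun F =>
    RatFunc.algebraMap_eq_C (K := ℂ) ▸ F.algebraMap_mem a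
  set N := g.denom.natDegree with hN
  have hcomp : ∀ W : ℂ[X], W.natDegree ≤ N →
      aeval T⁻¹ (reflect N (W.comp (X + C a))) * T ^ N = aeval R W := by
    intro W hW
    let _ : Invertible T := invertibleOfNonzero hT0
    have h := eval₂_reflect_mul_pow (algebraMap ℂ (RatFunc ℂ)) T N (W.comp (X + C a))
      (by rw [natDegree_comp, natDegree_X_add_C, mul_one]; exact hW)
    rw [invOf_eq_inv] at h
    rw [aeval_def, h, ← aeval_def, aeval_comp]
    simp [hT, RatFunc.algebraMap_eq_C]
  refine ⟨T⁻¹, hB.of_aeval_eq_mul (U := reflect N (g.num.comp (X + C a)))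
    (V := reflect N (g.denom.comp (X + C a))) ?_ ?_, ?_⟩
  · have hcoeff : ∀ W : ℂ[X], (reflect N (W.comp (X + C a))).coeff N = W.eval a := by
      intro W
      rw [coeff_reflect, revAt_le le_rfl, Nat.sub_self, coeff_zero_eq_eval_zero, eval_comp]
      simp
    refine lt_of_lt_of_le ?_ (le_degree_of_ne_zero (n := N) (by rwa [hcoeff]))
    rw [degree_lt_iff_coeff_zero]
    intro i hi
    rcases hi.eq_or_lt with rfl | hi
    · rw [hcoeff]; exact ha
    · rw [coeff_reflect, revAt_eq_self_of_lt hi]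
      apply coeff_eq_zero_of_natDegree_lt
      rwa [natDegree_comp, natDegree_X_add_C, mul_one]
  · apply mul_right_cancel₀ (pow_ne_zero N hT0)
    rw [mul_assoc, hcomp _ le_rfl, hcomp _ (natDegree_le_natDegree hge), hrel]
  · apply le_antisymm
    · rw [adjoin_simple_le_iff]
      exact inv_mem (sub_mem (mem_adjoin_simple_self ℂ R) (hCa _))
    · rw [adjoin_simple_le_iff]
      have : R = (T⁻¹)⁻¹ + RatFunc.C a := by rw [inv_inv, hT, sub_add_cancel]
      rw [this]
      exact add_mem (inv_mem (mem_adjoin_simple_self ℂ _)) (hCa _)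

/-- Two generators of the same simple subfield differ by a Möbius transformation. -/
theorem exists_moebius_of_mem_adjoin {F : Type*} [Field F] {R S : RatFunc F}
    (hR : ¬ ∃ c : F, R = RatFunc.C c) (hRS : R ∈ F⟮S⟯) (hSR : S ∈ F⟮R⟯) :
    ∃ a b c d : F, ¬ (c = 0 ∧ d = 0) ∧
      S * (RatFunc.C c * R + RatFunc.C d) = RatFunc.C a * R + RatFunc.C b := by
  have htr := RatFunc.transcendental_of_ne_C R hR
  set e := RatFunc.algEquivOfTranscendental R htr with he
  obtain ⟨g, hg⟩ := e.surjective ⟨S, hSR⟩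
  have hSg : S = aeval R g.num / aeval R g.denom := by
    rw [← RatFunc.algEquivOfTranscendental_apply R htr, ← he, hg]
  have hden : aeval R g.denom ≠ 0 := fun h =>
    g.denom_ne_zero ((transcendental_iff.1 htr) _ h)
  have htop : F⟮g⟯ = ⊤ := by
    rw [eq_top_iff, ← RatFunc.adjoin_X, adjoin_simple_le_iff]
    obtain ⟨u, v, huv⟩ := (mem_adjoin_simple_iff F R).1 hRS
    have hX : RatFunc.X = aeval g u / aeval g v := by
      apply e.injective
      apply Subtype.val_injective
      have haeval : ∀ W : F[X], ((e (aeval g W) : F⟮R⟯) : RatFunc F) = aeval S W := by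
        intro W
        rw [← aeval_algHom_apply, hg]
        exact (aeval_algHom_apply (F⟮R⟯).val ⟨S, hSR⟩ W).symm
      rw [map_div₀]
      push_cast
      rw [haeval, haeval, ← huv, ← RatFunc.algebraMap_X, he,
        RatFunc.algEquivOfTranscendental_algebraMap, aeval_X]
      rfl
    exact (mem_adjoin_simple_iff F _).2 ⟨u, v, hX⟩
  have hmax := RatFunc.finrank_eq_max_natDegree g
  rw [htop, IntermediateField.finrank_top] at hmax
  obtain ⟨a, b, hab⟩ := exists_eq_X_add_C_of_natDegree_le_one (p := g.num) (by omega)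
  obtain ⟨c, d, hcd⟩ := exists_eq_X_add_C_of_natDegree_le_one (p := g.denom) (by omega)
  refine ⟨a, b, c, d, ?_, ?_⟩
  · rintro ⟨rfl, rfl⟩
    exact g.denom_ne_zero (by simpa using hcd)
  · have hrel : S * aeval R g.denom = aeval R g.num := by rw [hSg, div_mul_cancel₀ _ hden]
    rw [hab, hcd] at hrel
    simpa [RatFunc.algebraMap_eq_C] using hrel

theorem adjoin_C_mul_add_C {F : Type*} [Field F] (R : RatFunc F) {a : F} (ha : a ≠ 0) (b : F) :
    F⟮RatFunc.C a * R + RatFunc.C b⟯ = F⟮R⟯ := by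
  have hC : ∀ (L : IntermediateField F (RatFunc F)) (c : F), RatFunc.C c ∈ L := fun L c =>
    RatFunc.algebraMap_eq_C (K := F) ▸ L.algebraMap_mem c
  have ha' : RatFunc.C a ≠ 0 := by simpa using ha
  apply le_antisymm
  · rw [adjoin_simple_le_iff]
    exact add_mem (mul_mem (hC _ _) (mem_adjoin_simple_self F R)) (hC _ _)
  · rw [adjoin_simple_le_iff]
    have h := mul_mem (inv_mem (hC _ a)) (sub_mem
      (mem_adjoin_simple_self F (RatFunc.C a * R + RatFunc.C b)) (hC _ b))
    rwa [add_sub_cancel_right, inv_mul_cancel_left₀ ha'] at h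

theorem Tn_mul (n : ℕ) (hn : 1 ≤ n) :
    (RatFunc.X ^ n + 1 : RatFunc ℂ) ≠ 0 ∧
      Tn n * (RatFunc.X ^ n + 1) = RatFunc.C (-Complex.I) * (RatFunc.X ^ n - 1) := by
  have h : (RatFunc.X ^ n + 1 : RatFunc ℂ) ≠ 0 := by
    have : (X ^ n + C 1 : ℂ[X]) ≠ 0 := X_pow_add_C_ne_zero hn 1
    simpa [RatFunc.algebraMap_X] using RatFunc.algebraMap_ne_zero this
  exact ⟨h, by rw [Tn, div_mul_cancel₀ _ h]⟩

theorem adjoin_Tn (n : ℕ) (hn : 1 ≤ n) : ℂ⟮Tn n⟯ = ℂ⟮(RatFunc.X ^ n : RatFunc ℂ)⟯ := by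
  have hC : ∀ (L : IntermediateField ℂ (RatFunc ℂ)) (c : ℂ), RatFunc.C c ∈ L := fun L c =>
    RatFunc.algebraMap_eq_C (K := ℂ) ▸ L.algebraMap_mem c
  obtain ⟨h0, hmul⟩ := Tn_mul n hn
  apply le_antisymm
  · rw [adjoin_simple_le_iff]
    have hX := mem_adjoin_simple_self ℂ (RatFunc.X ^ n : RatFunc ℂ)
    exact div_mem (mul_mem (hC _ _) (sub_mem hX (one_mem _))) (add_mem hX (one_mem _))
  · rw [adjoin_simple_le_iff]
    have hT := mem_adjoin_simple_self ℂ (Tn n)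
    have hI : (RatFunc.C Complex.I) ^ 2 = (-1 : RatFunc ℂ) := by
      rw [← map_pow, Complex.I_sq]; simp
    rw [map_neg] at hmul
    have hne : Tn n + RatFunc.C Complex.I ≠ 0 := by
      intro h
      have h2 : (2 : RatFunc ℂ) * RatFunc.C Complex.I = 0 := by
        linear_combination (RatFunc.X ^ n + 1) * h - hmul
      simp at h2
    have hX : (RatFunc.X ^ n : RatFunc ℂ) =
        (RatFunc.C Complex.I - Tn n) / (Tn n + RatFunc.C Complex.I) := by
      rw [eq_div_iff hne]
      linear_combination hmul
    rw [hX]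
    exact div_mem (sub_mem (hC _ _) hT) (add_mem hT (hC _ _))

section Conjugation

variable {σ : RatFunc ℂ ≃+* RatFunc ℂ}

theorem IsLaurentRF.map_conj (hσC : ∀ c : ℂ, σ (RatFunc.C c) = RatFunc.C (starRingEnd ℂ c))
    (hσX : σ RatFunc.X = RatFunc.X⁻¹) {R : RatFunc ℂ} (hR : IsLaurentRF R) :
    IsLaurentRF (σ R) := by
  obtain ⟨P, m, rfl⟩ := hR
  rw [map_div₀, map_pow, hσX, inv_pow, div_inv_eq_mul]
  refine IsLaurentRF.mul ?_ (IsLaurentRF.pow ?_ m)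
  · induction P using Polynomial.induction_on' with
    | add p q hp hq => rw [map_add, map_add]; exact hp.add hq
    | monomial n a =>
      rw [← C_mul_X_pow_eq_monomial, map_mul, map_pow, RatFunc.algebraMap_X, RatFunc.algebraMap_C,
        map_mul, map_pow, hσC, hσX]
      exact (IsLaurentRF.const _).mul (IsLaurentRF.X_inv.pow n)
  · rw [← RatFunc.algebraMap_X]
    exact IsLaurentRF.algebraMap_polynomial _

theorem conj_mem_adjoin (hσC : ∀ c : ℂ, σ (RatFunc.C c) = RatFunc.C (starRingEnd ℂ c))
    {R S : RatFunc ℂ} (h : S ∈ ℂ⟮R⟯) : σ S ∈ ℂ⟮σ R⟯ := by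
  obtain ⟨u, v, rfl⟩ := (mem_adjoin_simple_iff ℂ S).1 h
  have haeval : ∀ W : ℂ[X], σ (aeval R W) = aeval (σ R) (W.map (starRingEnd ℂ)) := by
    intro W
    have hcomp : (σ : RatFunc ℂ →+* RatFunc ℂ).comp (algebraMap ℂ (RatFunc ℂ)) =
        (algebraMap ℂ (RatFunc ℂ)).comp (starRingEnd ℂ) := by
      ext c
      simp [RatFunc.algebraMap_eq_C, hσC]
    rw [aeval_def, aeval_def, eval₂_map, ← hcomp]
    exact hom_eval₂ W _ (σ : RatFunc ℂ →+* RatFunc ℂ) R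
  exact (mem_adjoin_simple_iff ℂ _).2 ⟨_, _, by rw [map_div₀, haeval, haeval]⟩

theorem conj_Tn (hσC : ∀ c : ℂ, σ (RatFunc.C c) = RatFunc.C (starRingEnd ℂ c))
    (hσX : σ RatFunc.X = RatFunc.X⁻¹) (n : ℕ) (hn : 1 ≤ n) : σ (Tn n) = Tn n := by
  obtain ⟨h0, hmul⟩ := Tn_mul n hn
  have hX : (RatFunc.X ^ n : RatFunc ℂ) ≠ 0 := pow_ne_zero n RatFunc.X_ne_zero
  have hinv : (RatFunc.X ^ n : RatFunc ℂ)⁻¹ * RatFunc.X ^ n = 1 := inv_mul_cancel₀ hX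
  have hσ := congrArg σ hmul
  simp only [map_mul, map_add, map_sub, map_pow, map_one, hσC, hσX, inv_pow, map_neg,
    Complex.conj_I, neg_neg] at hσ hmul
  apply mul_right_cancel₀ h0
  rw [hmul]
  linear_combination RatFunc.X ^ n * hσ - (σ (Tn n) - RatFunc.C Complex.I) * hinv

theorem conj_add_I_mul (hσC : ∀ c : ℂ, σ (RatFunc.C c) = RatFunc.C (starRingEnd ℂ c))
    {a b : RatFunc ℂ} (ha : σ a = a) (hb : σ b = b) :
    σ (a + RatFunc.C Complex.I * b) = a - RatFunc.C Complex.I * b := by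
  rw [map_add, map_mul, hσC, ha, hb, Complex.conj_I, map_neg]
  ring

/-- The compositum of `ℂ` with a subfield `K` that contains `ℝ` and is fixed by `σ`. -/
def complexify (hσC : ∀ c : ℂ, σ (RatFunc.C c) = RatFunc.C (starRingEnd ℂ c))
    (K : Subfield (RatFunc ℂ)) (hKR : ∀ r : ℝ, RatFunc.C (r : ℂ) ∈ K)
    (hKfix : ∀ R ∈ K, σ R = R) : IntermediateField ℂ (RatFunc ℂ) where
  carrier := {x | ∃ a ∈ K, ∃ b ∈ K, x = a + RatFunc.C Complex.I * b}
  add_mem' := by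
    rintro _ _ ⟨a, ha, b, hb, rfl⟩ ⟨c, hc, d, hd, rfl⟩
    exact ⟨a + c, add_mem ha hc, b + d, add_mem hb hd, by ring⟩
  mul_mem' := by
    rintro _ _ ⟨a, ha, b, hb, rfl⟩ ⟨c, hc, d, hd, rfl⟩
    have hI : (RatFunc.C Complex.I) ^ 2 = (-1 : RatFunc ℂ) := by
      rw [← map_pow, Complex.I_sq]; simp
    refine ⟨a * c - b * d, sub_mem (mul_mem ha hc) (mul_mem hb hd),
      a * d + b * c, add_mem (mul_mem ha hd) (mul_mem hb hc), ?_⟩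
    linear_combination b * d * hI
  algebraMap_mem' := by
    intro c
    refine ⟨_, hKR c.re, _, hKR c.im, ?_⟩
    rw [RatFunc.algebraMap_eq_C, ← map_mul, ← map_add, mul_comm, Complex.re_add_im]
  inv_mem' := by
    rintro _ ⟨a, ha, b, hb, rfl⟩
    have hI : (RatFunc.C Complex.I) ^ 2 = (-1 : RatFunc ℂ) := by
      rw [← map_pow, Complex.I_sq]; simp
    have hs : a ^ 2 + b ^ 2 ∈ K := add_mem (pow_mem ha 2) (pow_mem hb 2)
    refine ⟨a / (a ^ 2 + b ^ 2), div_mem ha hs, -b / (a ^ 2 + b ^ 2), div_mem (neg_mem hb) hs, ?_⟩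
    have hσ := conj_add_I_mul hσC (hKfix a ha) (hKfix b hb)
    have hprod : (a + RatFunc.C Complex.I * b) * (a - RatFunc.C Complex.I * b) =
        a ^ 2 + b ^ 2 := by
      linear_combination -b ^ 2 * hI
    rcases eq_or_ne (a + RatFunc.C Complex.I * b) 0 with h0 | h0
    · rw [h0, zero_mul] at hprod
      simp [h0, ← hprod]
    · have h1 : a - RatFunc.C Complex.I * b ≠ 0 := by
        rw [← hσ]; exact (map_ne_zero_iff σ σ.injective).2 h0
      have h2 : a ^ 2 + b ^ 2 ≠ 0 := hprod ▸ mul_ne_zero h0 h1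
      rw [inv_eq_iff_eq_inv, ← mul_div_assoc, ← add_div, inv_div, eq_div_iff, ← hprod]
      · ring
      · convert! h1 using 1
        ring

variable (hσC : ∀ c : ℂ, σ (RatFunc.C c) = RatFunc.C (starRingEnd ℂ c))
  {K : Subfield (RatFunc ℂ)} (hKR : ∀ r : ℝ, RatFunc.C (r : ℂ) ∈ K)
  (hKfix : ∀ R ∈ K, σ R = R)

theorem le_complexify {x : RatFunc ℂ} (hx : x ∈ K) : x ∈ complexify hσC K hKR hKfix :=
  ⟨x, hx, 0, zero_mem K, by simp⟩

theorem conj_conj_of_mem_complexify {x : RatFunc ℂ} (hx : x ∈ complexify hσC K hKR hKfix) :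
    σ (σ x) = x := by
  obtain ⟨a, ha, b, hb, rfl⟩ := hx
  rw [conj_add_I_mul hσC (hKfix a ha) (hKfix b hb), sub_eq_add_neg, ← mul_neg,
    conj_add_I_mul hσC (hKfix a ha) (hKfix _ (neg_mem hb)), mul_neg, sub_neg_eq_add]

theorem conj_mem_complexify {x : RatFunc ℂ} (hx : x ∈ complexify hσC K hKR hKfix) :
    σ x ∈ complexify hσC K hKR hKfix := by
  obtain ⟨a, ha, b, hb, rfl⟩ := hx
  rw [conj_add_I_mul hσC (hKfix a ha) (hKfix b hb)]
  exact ⟨a, ha, -b, neg_mem hb, by ring⟩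

theorem mem_of_mem_complexify {x : RatFunc ℂ} (hx : x ∈ complexify hσC K hKR hKfix)
    (hσx : σ x = x) : x ∈ K := by
  obtain ⟨a, ha, b, hb, rfl⟩ := hx
  rw [conj_add_I_mul hσC (hKfix a ha) (hKfix b hb)] at hσx
  have h : (2 : RatFunc ℂ) * (RatFunc.C Complex.I * b) = 0 := by linear_combination -hσx
  rw [(mul_eq_zero_iff_left two_ne_zero).1 h, add_zero]
  exact ha

theorem eq_closure_of_complexify_eq_adjoin {S : RatFunc ℂ} (hS : σ S = S)
    (h : complexify hσC K hKR hKfix = ℂ⟮S⟯) :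
    K = Subfield.closure (Set.range (fun r : ℝ => RatFunc.C (r : ℂ)) ∪ {S}) := by
  set L := Subfield.closure (Set.range (fun r : ℝ => RatFunc.C (r : ℂ)) ∪ {S}) with hL
  have hLK : L ≤ K := by
    rw [hL, Subfield.closure_le]
    rintro _ (⟨r, rfl⟩ | rfl)
    · exact hKR r
    · exact mem_of_mem_complexify hσC hKR hKfix (h ▸ mem_adjoin_simple_self ℂ _) hS
  have hLR : ∀ r : ℝ, RatFunc.C (r : ℂ) ∈ L := fun r =>
    Subfield.subset_closure (Or.inl ⟨r, rfl⟩)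
  have hLfix : ∀ R ∈ L, σ R = R := fun R hR => hKfix R (hLK hR)
  have hle : ℂ⟮S⟯ ≤ complexify hσC L hLR hLfix :=
    adjoin_simple_le_iff.2 (le_complexify hσC hLR hLfix (Subfield.subset_closure (Or.inr rfl)))
  refine le_antisymm (fun x hx => ?_) hLK
  exact mem_of_mem_complexify hσC hLR hLfix
    (hle (h ▸ le_complexify hσC hKR hKfix hx)) (hKfix x hx)

end Conjugation

/-- If `σ` acts on `R` as an affine map and `σ (σ R) = R`, then some nonconstant affine transform of
`R` is fixed by `σ`. -/
theorem exists_fixed_affine_transform {σ : RatFunc ℂ ≃+* RatFunc ℂ}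
    (hσC : ∀ c : ℂ, σ (RatFunc.C c) = RatFunc.C (starRingEnd ℂ c))
    {R : RatFunc ℂ} (hσσ : σ (σ R) = R) {α β : ℂ}
    (hσR : σ R = RatFunc.C α * R + RatFunc.C β) :
    ∃ a b : ℂ, a ≠ 0 ∧
      σ (RatFunc.C a * R + RatFunc.C b) = RatFunc.C a * R + RatFunc.C b := by
  by_cases hα : 1 + α = 0
  · refine ⟨Complex.I * (1 - α), -Complex.I * β, ?_, ?_⟩
    · rw [show α = -1 by linear_combination hα]
      norm_num
    · have h : RatFunc.C (Complex.I * (1 - α)) * R + RatFunc.C (-Complex.I * β) =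
          RatFunc.C Complex.I * (R - σ R) := by
        rw [hσR]; simp only [map_mul, map_sub, map_one, map_neg]; ring
      rw [h, map_mul, map_sub, hσσ, hσC, Complex.conj_I, map_neg]
      ring
  · refine ⟨1 + α, β, hα, ?_⟩
    have h : RatFunc.C (1 + α) * R + RatFunc.C β = R + σ R := by
      rw [hσR, map_add, map_one]; ring
    rw [h, map_add, hσσ, add_comm]

/-- Every subfield of `ℒ_ℝ(z)` containing `ℝ` and a nonconstant Laurent element
is generated over `ℝ` either by some `T_n`, or by a single nonconstant
`σ`-invariant Laurent element. -/
theorem subfield_gen_by_Tn_or_laurent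
    (σ : RatFunc ℂ ≃+* RatFunc ℂ)
    (hσC : ∀ c : ℂ, σ (RatFunc.C c) = RatFunc.C (starRingEnd ℂ c))
    (hσX : σ RatFunc.X = RatFunc.X⁻¹)
    (K : Subfield (RatFunc ℂ))
    (hKR : ∀ r : ℝ, RatFunc.C (r : ℂ) ∈ K)
    (hKfix : ∀ R ∈ K, σ R = R)
    (hKL : ∃ B ∈ K, IsLaurentRF B ∧ ¬ ∃ c : ℂ, B = RatFunc.C c) :
    (∃ n : ℕ, 1 ≤ n ∧
      K = Subfield.closure
        (Set.range (fun r : ℝ => RatFunc.C (r : ℂ)) ∪ {Tn n})) ∨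
    (∃ B : RatFunc ℂ, IsLaurentRF B ∧ σ B = B ∧ (¬ ∃ c : ℂ, B = RatFunc.C c) ∧
      K = Subfield.closure
        (Set.range (fun r : ℝ => RatFunc.C (r : ℂ)) ∪ {B})) := by
  set E := complexify hσC K hKR hKfix with hE
  obtain ⟨B, hBK, hB, hBc⟩ := hKL
  have hBE : B ∈ E := le_complexify hσC hKR hKfix hBK
  have hEbot : E ≠ ⊥ := by
    intro h
    rw [h] at hBE
    obtain ⟨c, hc⟩ := IntermediateField.mem_bot.1 hBE
    exact hBc ⟨c, by rw [← hc, RatFunc.algebraMap_eq_C]⟩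
  obtain ⟨R, hR, hRE⟩ := exists_isLaurentRF_adjoin_eq hB hBc
    (RatFunc.Luroth.generator_ne_C hEbot) (RatFunc.Luroth.eq_adjoin_generator (E := E) ▸ hBE)
  rw [← RatFunc.Luroth.eq_adjoin_generator] at hRE
  have hRmem : R ∈ E := hRE ▸ mem_adjoin_simple_self ℂ R
  have hRc : ¬ ∃ c : ℂ, R = RatFunc.C c := by
    rintro ⟨c, rfl⟩
    apply hEbot
    rw [← hRE, adjoin_simple_eq_bot_iff, IntermediateField.mem_bot]
    exact ⟨c, by rw [RatFunc.algebraMap_eq_C]⟩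
  have hσσ : σ (σ R) = R := conj_conj_of_mem_complexify hσC hKR hKfix hRmem
  have hσR : σ R ∈ ℂ⟮R⟯ := hRE ▸ conj_mem_complexify hσC hKR hKfix hRmem
  have hRσ : R ∈ ℂ⟮σ R⟯ := by simpa only [hσσ] using conj_mem_adjoin hσC hσR
  obtain ⟨a, b, c, d, hcd, hmoeb⟩ := exists_moebius_of_mem_adjoin hRc hRσ hσR
  by_cases hc : c = 0
  · right
    have hd : d ≠ 0 := fun hd => hcd ⟨hc, hd⟩
    have hd' : RatFunc.C d ≠ 0 := by simpa using hd
    have haff : σ R = RatFunc.C (a / d) * R + RatFunc.C (b / d) := by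
      rw [hc, map_zero, zero_mul, zero_add, ← eq_div_iff hd'] at hmoeb
      rw [hmoeb, map_div₀, map_div₀]
      ring
    obtain ⟨p, q, hp, hfix⟩ := exists_fixed_affine_transform hσC hσσ haff
    refine ⟨_, ((IsLaurentRF.const p).mul hR).add (IsLaurentRF.const q), hfix, ?_,
      eq_closure_of_complexify_eq_adjoin hσC hKR hKfix hfix ?_⟩
    · rintro ⟨s, hs⟩
      have hp' : RatFunc.C p ≠ 0 := by simpa using hp
      refine hRc ⟨(s - q) / p, ?_⟩
      rw [map_div₀, map_sub, eq_div_iff hp', ← hs]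
      ring
    · rw [adjoin_C_mul_add_C R hp, hRE]
  · left
    have hc' : RatFunc.C c ≠ 0 := by simpa using hc
    have hprod : (RatFunc.C c * R + RatFunc.C d) * (σ R + RatFunc.C (-(a / c))) =
        RatFunc.C (b - a * d / c) := by
      simp only [map_sub, map_div₀, map_mul, map_neg]
      field_simp
      linear_combination RatFunc.C c * hmoeb
    have hne : b - a * d / c ≠ 0 := by
      intro h0
      rw [h0, map_zero, mul_eq_zero] at hprod
      rcases hprod with h | h
      · refine hRc ⟨-d / c, ?_⟩
        rw [map_div₀, eq_div_iff hc', map_neg]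
        linear_combination h
      · refine hRc ⟨starRingEnd ℂ (a / c), ?_⟩
        rw [map_neg, ← sub_eq_add_neg, sub_eq_zero] at h
        rw [← hσσ, h, hσC]
    obtain ⟨p, k, hp, hk⟩ := IsLaurentRF.exists_eq_C_mul_zpow
      (((IsLaurentRF.const c).mul hR).add (IsLaurentRF.const d))
      ((hR.map_conj hσC hσX).add (IsLaurentRF.const (-(a / c)))) hne hprod
    have hEk : ℂ⟮(RatFunc.X ^ k : RatFunc ℂ)⟯ = E := by
      rw [← hRE, ← adjoin_C_mul_add_C R hc d, hk]
      simpa using (adjoin_C_mul_add_C (RatFunc.X ^ k : RatFunc ℂ) hp 0).symm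
    have hk0 : k ≠ 0 := by
      rintro rfl
      exact hEbot (by rw [← hEk, zpow_zero, adjoin_one])
    have hn : 1 ≤ k.natAbs := Int.natAbs_pos.2 hk0
    refine ⟨k.natAbs, hn, eq_closure_of_complexify_eq_adjoin hσC hKR hKfix
      (conj_Tn hσC hσX _ hn) ?_⟩
    rw [adjoin_Tn _ hn, ← hE, ← hEk]
    rcases Int.natAbs_eq k with h | h
    · rw [← zpow_natCast, ← h]
    · rw [h, zpow_neg, zpow_natCast, Int.natAbs_neg, Int.natAbs_natCast]
      apply le_antisymm <;> rw [adjoin_simple_le_iff]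
      · simpa using inv_mem (mem_adjoin_simple_self ℂ (RatFunc.X ^ k.natAbs : RatFunc ℂ))
      · simpa using inv_mem (mem_adjoin_simple_self ℂ (RatFunc.X ^ k.natAbs : RatFunc ℂ)⁻¹)
end

section
/- Let T denote the ℝ-algebra of trigonometric polynomials (an integral domain under pointwise operations). Then the field of fractions of T is isomorphic, as an ℝ-algebra, to the field ℝ(x) of rational functions in one variable over ℝ, via an isomorphism ψ sending sin θ ↦ 2x/(1 + x²) and cos θ ↦ (1 − x²)/(1 + x²). -/
/-- The ℝ-algebra of trigonometric polynomials: the ℝ-subalgebra of `ℝ → ℝ`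
generated by `sin` and `cos`. -/
noncomputable def TrigPolyAlg : Subalgebra ℝ (ℝ → ℝ) :=
  Algebra.adjoin ℝ ({Real.sin, Real.cos} : Set (ℝ → ℝ))

theorem sin_mem_trigPolyAlg : Real.sin ∈ TrigPolyAlg :=
  Algebra.subset_adjoin (Set.mem_insert _ _)

theorem cos_mem_trigPolyAlg : Real.cos ∈ TrigPolyAlg :=
  Algebra.subset_adjoin (Set.mem_insert_of_mem _ rfl)

open Polynomial

theorem one_add_ratFuncX_sq_ne_zero : (1 + RatFunc.X ^ 2 : RatFunc ℝ) ≠ 0 := by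
  have h : (1 + X ^ 2 : ℝ[X]) ≠ 0 := fun h => by
    simpa using congrArg (Polynomial.eval 0) h
  simpa using (map_ne_zero_iff (algebraMap ℝ[X] (RatFunc ℝ))
    (RatFunc.algebraMap_injective ℝ)).2 h

theorem dense_cos_half_ne_zero : Dense {θ : ℝ | Real.cos (θ / 2) ≠ 0} := by
  have h : {θ : ℝ | Real.cos (θ / 2) = 0}.Countable := by
    refine (Set.countable_range fun k : ℤ => (2 * k + 1) * Real.pi).mono fun θ hθ => ?_
    obtain ⟨k, hk⟩ := Real.cos_eq_zero_iff.1 hθ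
    exact ⟨k, by simp only; linarith⟩
  exact h.dense_compl ℝ

theorem sin_mul_one_add_tan_half_sq {θ : ℝ} (h : Real.cos (θ / 2) ≠ 0) :
    Real.sin θ * (1 + Real.tan (θ / 2) ^ 2) = 2 * Real.tan (θ / 2) := by
  have h1 := Real.sin_two_mul (θ / 2)
  rw [mul_div_cancel₀ θ two_ne_zero] at h1
  rw [h1, Real.tan_eq_sin_div_cos]
  field_simp
  linear_combination Real.sin (θ / 2) * Real.sin_sq_add_cos_sq (θ / 2)

theorem cos_mul_one_add_tan_half_sq {θ : ℝ} (h : Real.cos (θ / 2) ≠ 0) :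
    Real.cos θ * (1 + Real.tan (θ / 2) ^ 2) = 1 - Real.tan (θ / 2) ^ 2 := by
  have h1 := Real.cos_two_mul' (θ / 2)
  rw [mul_div_cancel₀ θ two_ne_zero] at h1
  rw [h1, Real.tan_eq_sin_div_cos]
  field_simp
  linear_combination (Real.cos (θ / 2) ^ 2 - Real.sin (θ / 2) ^ 2) *
    Real.sin_sq_add_cos_sq (θ / 2)

/-- The graph of the half-angle substitution: the subalgebra of `(ℝ → ℝ) × ℝ(x)` generated by
the pairs `(sin, 2x/(1+x²))` and `(cos, (1-x²)/(1+x²))`. -/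
noncomputable def halfAngleGraph : Subalgebra ℝ ((ℝ → ℝ) × RatFunc ℝ) :=
  Algebra.adjoin ℝ {(Real.sin, 2 * RatFunc.X / (1 + RatFunc.X ^ 2)),
    (Real.cos, (1 - RatFunc.X ^ 2) / (1 + RatFunc.X ^ 2))}

theorem sin_mem_halfAngleGraph :
    (Real.sin, 2 * RatFunc.X / (1 + RatFunc.X ^ 2)) ∈ halfAngleGraph :=
  Algebra.subset_adjoin (Set.mem_insert _ _)

theorem cos_mem_halfAngleGraph :
    (Real.cos, (1 - RatFunc.X ^ 2) / (1 + RatFunc.X ^ 2)) ∈ halfAngleGraph :=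
  Algebra.subset_adjoin (Set.mem_insert_of_mem _ rfl)

theorem map_fst_halfAngleGraph :
    halfAngleGraph.map (AlgHom.fst ℝ (ℝ → ℝ) (RatFunc ℝ)) = TrigPolyAlg := by
  rw [halfAngleGraph, AlgHom.map_adjoin, TrigPolyAlg, Set.image_pair]
  rfl

theorem continuous_fst_of_mem_halfAngleGraph {p : (ℝ → ℝ) × RatFunc ℝ}
    (hp : p ∈ halfAngleGraph) : Continuous p.1 := by
  induction hp using Algebra.adjoin_induction with
  | mem p hp =>
    rcases hp with rfl | rfl
    exacts [Real.continuous_sin, Real.continuous_cos]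
  | algebraMap r => exact continuous_const
  | add p q _ _ hp hq => exact hp.add hq
  | mul p q _ _ hp hq => exact hp.mul hq

/-- Both entries of a pair in the graph become the same polynomial, in `x` and in `tan (θ / 2)`
respectively, after clearing the same power of `1 + x²`. -/
theorem exists_polynomial_of_mem_halfAngleGraph {p : (ℝ → ℝ) × RatFunc ℝ}
    (hp : p ∈ halfAngleGraph) : ∃ (n : ℕ) (q : ℝ[X]),
      p.2 * (1 + RatFunc.X ^ 2) ^ n = algebraMap ℝ[X] (RatFunc ℝ) q ∧
      ∀ θ : ℝ, Real.cos (θ / 2) ≠ 0 →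
        p.1 θ * (1 + Real.tan (θ / 2) ^ 2) ^ n = q.eval (Real.tan (θ / 2)) := by
  have h0 := one_add_ratFuncX_sq_ne_zero
  induction hp using Algebra.adjoin_induction with
  | mem p hp =>
    rcases hp with rfl | rfl
    · refine ⟨1, 2 * X, ?_, fun θ hθ => ?_⟩
      · simp [div_mul_cancel₀ _ h0, map_ofNat (algebraMap ℝ[X] (RatFunc ℝ)) 2]
      · simpa using sin_mul_one_add_tan_half_sq hθ
    · refine ⟨1, 1 - X ^ 2, ?_, fun θ hθ => ?_⟩
      · simp [div_mul_cancel₀ _ h0]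
      · simpa using cos_mul_one_add_tan_half_sq hθ
  | algebraMap r =>
    refine ⟨0, C r, ?_, fun θ _ => ?_⟩
    · simp [RatFunc.algebraMap_eq_C]
    · simp
  | add p q _ _ hp hq =>
    obtain ⟨m, a, ha, ha'⟩ := hp
    obtain ⟨n, b, hb, hb'⟩ := hq
    refine ⟨m + n, a * (1 + X ^ 2) ^ n + b * (1 + X ^ 2) ^ m, ?_, fun θ hθ => ?_⟩
    · simp only [Prod.snd_add, map_add, map_mul, map_pow, map_one, RatFunc.algebraMap_X,
        ← ha, ← hb]
      ring
    · simp only [Prod.fst_add, Pi.add_apply, eval_add, eval_mul, eval_pow, eval_one, eval_X,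
        ← ha' θ hθ, ← hb' θ hθ]
      ring
  | mul p q _ _ hp hq =>
    obtain ⟨m, a, ha, ha'⟩ := hp
    obtain ⟨n, b, hb, hb'⟩ := hq
    refine ⟨m + n, a * b, ?_, fun θ hθ => ?_⟩
    · simp only [Prod.snd_mul, map_mul, ← ha, ← hb]
      ring
    · simp only [Prod.fst_mul, Pi.mul_apply, eval_mul, ← ha' θ hθ, ← hb' θ hθ]
      ring

theorem fst_eq_zero_iff_snd_eq_zero_of_mem_halfAngleGraph {p : (ℝ → ℝ) × RatFunc ℝ}
    (hp : p ∈ halfAngleGraph) : p.1 = 0 ↔ p.2 = 0 := by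
  obtain ⟨n, q, hq, hq'⟩ := exists_polynomial_of_mem_halfAngleGraph hp
  constructor
  · intro h
    have hq0 : q = 0 := Polynomial.funext fun x => by
      have hx := hq' (2 * Real.arctan x)
      rw [mul_div_cancel_left₀ _ two_ne_zero, Real.tan_arctan] at hx
      simpa [h] using (hx (Real.cos_arctan_pos x).ne').symm
    rw [hq0, map_zero] at hq
    exact (mul_eq_zero.1 hq).resolve_right (pow_ne_zero _ one_add_ratFuncX_sq_ne_zero)
  · intro h
    have hq0 : q = 0 := RatFunc.algebraMap_injective ℝ (by rw [← hq, h, zero_mul, map_zero])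
    refine (continuous_fst_of_mem_halfAngleGraph hp).ext_on dense_cos_half_ne_zero
      continuous_zero fun θ hθ => ?_
    have hθ' := hq' θ hθ
    rw [hq0, eval_zero] at hθ'
    exact (mul_eq_zero.1 hθ').resolve_right (by positivity)

/-- The projection of the graph of the half-angle substitution to the trigonometric
polynomials. -/
noncomputable def halfAngleGraphFst : halfAngleGraph →ₐ[ℝ] TrigPolyAlg :=
  ((AlgHom.fst ℝ (ℝ → ℝ) (RatFunc ℝ)).comp halfAngleGraph.val).codRestrict TrigPolyAlg fun p =>
    map_fst_halfAngleGraph ▸ ⟨p, p.2, rfl⟩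

theorem halfAngleGraphFst_bijective : Function.Bijective halfAngleGraphFst := by
  refine ⟨(injective_iff_map_eq_zero _).2 fun p hp => ?_, fun f => ?_⟩
  · have h1 : p.1.1 = 0 := congrArg Subtype.val hp
    exact Subtype.ext
      (Prod.ext h1 ((fst_eq_zero_iff_snd_eq_zero_of_mem_halfAngleGraph p.2).1 h1))
  · obtain ⟨p, hp, hpf⟩ := map_fst_halfAngleGraph.ge f.2
    exact ⟨⟨p, hp⟩, Subtype.ext hpf⟩

/-- The half-angle substitution on trigonometric polynomials, writing `f θ` as a rational
function of `x = tan (θ / 2)`. -/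
noncomputable def halfAngleSubst : TrigPolyAlg →ₐ[ℝ] RatFunc ℝ :=
  ((AlgHom.snd ℝ (ℝ → ℝ) (RatFunc ℝ)).comp halfAngleGraph.val).comp
    (AlgEquiv.ofBijective halfAngleGraphFst halfAngleGraphFst_bijective).symm

theorem halfAngleSubst_fst {p : (ℝ → ℝ) × RatFunc ℝ} (hp : p ∈ halfAngleGraph)
    (hp' : p.1 ∈ TrigPolyAlg) : halfAngleSubst ⟨p.1, hp'⟩ = p.2 := by
  have h : (AlgEquiv.ofBijective halfAngleGraphFst halfAngleGraphFst_bijective).symm ⟨p.1, hp'⟩ =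
      ⟨p, hp⟩ := (AlgEquiv.symm_apply_eq _).2 rfl
  exact congrArg (fun x : halfAngleGraph => x.1.2) h

theorem halfAngleSubst_sin : halfAngleSubst ⟨Real.sin, sin_mem_trigPolyAlg⟩ =
    2 * RatFunc.X / (1 + RatFunc.X ^ 2) :=
  halfAngleSubst_fst sin_mem_halfAngleGraph _

theorem halfAngleSubst_cos : halfAngleSubst ⟨Real.cos, cos_mem_trigPolyAlg⟩ =
    (1 - RatFunc.X ^ 2) / (1 + RatFunc.X ^ 2) :=
  halfAngleSubst_fst cos_mem_halfAngleGraph _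

theorem halfAngleSubst_injective : Function.Injective halfAngleSubst := by
  refine (injective_iff_map_eq_zero _).2 fun f hf => ?_
  obtain ⟨p, rfl⟩ := halfAngleGraphFst_bijective.surjective f
  have h2 : p.1.2 = 0 := (halfAngleSubst_fst p.2 (halfAngleGraphFst p).2).symm.trans hf
  exact Subtype.ext ((fst_eq_zero_iff_snd_eq_zero_of_mem_halfAngleGraph p.2).2 h2)

instance : IsDomain TrigPolyAlg := halfAngleSubst_injective.isDomain halfAngleSubst.toRingHom

theorem ratFuncX_eq_sin_div_one_add_cos : (RatFunc.X : RatFunc ℝ) =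
    2 * RatFunc.X / (1 + RatFunc.X ^ 2) /
      (1 + (1 - RatFunc.X ^ 2) / (1 + RatFunc.X ^ 2)) := by
  have h0 := one_add_ratFuncX_sq_ne_zero
  have h1 : (1 + (1 - RatFunc.X ^ 2) / (1 + RatFunc.X ^ 2) : RatFunc ℝ) =
      2 / (1 + RatFunc.X ^ 2) := by
    field_simp
    ring
  rw [h1]
  field_simp

/-- The field of fractions of the ring of trigonometric polynomials is
ℝ-algebra isomorphic to the field `ℝ(x)` of rational functions, via `ψ` with
`ψ(sin θ) = 2x/(1+x²)` and `ψ(cos θ) = (1-x²)/(1+x²)`. -/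
theorem fractionRing_trigPoly_equiv_ratFunc :
    ∃ ψ : FractionRing TrigPolyAlg ≃ₐ[ℝ] RatFunc ℝ,
      ψ (algebraMap TrigPolyAlg (FractionRing TrigPolyAlg)
          ⟨Real.sin, sin_mem_trigPolyAlg⟩) =
        2 * RatFunc.X / (1 + RatFunc.X ^ 2) ∧
      ψ (algebraMap TrigPolyAlg (FractionRing TrigPolyAlg)
          ⟨Real.cos, cos_mem_trigPolyAlg⟩) =
        (1 - RatFunc.X ^ 2) / (1 + RatFunc.X ^ 2) := by
  let Ψ : FractionRing TrigPolyAlg →ₐ[ℝ] RatFunc ℝ :=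
    IsFractionRing.liftAlgHom halfAngleSubst_injective
  have hΨ (f : TrigPolyAlg) : Ψ (algebraMap _ _ f) = halfAngleSubst f :=
    IsFractionRing.lift_algebraMap halfAngleSubst_injective f
  have hsin := (hΨ _).trans halfAngleSubst_sin
  have hcos := (hΨ _).trans halfAngleSubst_cos
  have hX : RatFunc.X ∈ Ψ.fieldRange := by
    rw [ratFuncX_eq_sin_div_one_add_cos, ← hsin, ← hcos]
    exact div_mem ⟨_, rfl⟩ (add_mem (one_mem _) ⟨_, rfl⟩)
  have htop : Ψ.fieldRange = ⊤ := by
    rw [eq_top_iff, ← RatFunc.adjoin_X, IntermediateField.adjoin_simple_le_iff]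
    exact hX
  exact ⟨AlgEquiv.ofBijective Ψ ⟨Ψ.injective, AlgHom.fieldRange_eq_top.1 htop⟩, hsin, hcos⟩
end
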